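/- arXiv:2208.07596 — 5 statements merged into one kernel-verified Lean document; each statement's English description precedes it below -/
import Mathlib

section
/- Let q > 1 be an integer, let χ be a non-principal primitive Dirichlet character modulo q, let k > 1 and ℓ > 0 be real numbers, and let s ∈ ℂ satisfy (1−k)/ℓ < Re(s) < 0. Then the function x ↦ x^{−s−1}·P_{k,ℓ,χ}(x) is integrable on (0,∞) and ∫_0^∞ x^{−s−1}·P_{k,ℓ,χ}(x) dx = Γ(−s)/L(ℓs + k, χ). -/
open Complex

/-- `P χ k ℓ x = ∑_{n=1}^∞ χ(n) μ(n) n^{-k} exp(-x/n^ℓ)`. -/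
noncomputable def P {q : ℕ} (χ : DirichletCharacter ℂ q) (k ℓ x : ℝ) : ℂ :=
  ∑' n : ℕ, χ (n : ZMod q) * (ArithmeticFunction.moebius n : ℂ) *
    (((n : ℝ) ^ (-k) * Real.exp (-x / (n : ℝ) ^ ℓ) : ℝ) : ℂ)

theorem mellin_of_P {q : ℕ} [NeZero q] (hq : 1 < q) (χ : DirichletCharacter ℂ q)
    (hχ : χ.IsPrimitive) (hχ1 : χ ≠ 1) (k ℓ : ℝ) (hk : 1 < k) (hℓ : 0 < ℓ)
    (s : ℂ) (hs1 : (1 - k) / ℓ < s.re) (hs2 : s.re < 0) :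
    MeasureTheory.IntegrableOn (fun x : ℝ => (x : ℂ) ^ (-s - 1) * P χ k ℓ x)
      (Set.Ioi 0) ∧
    ∫ x in Set.Ioi (0 : ℝ), (x : ℂ) ^ (-s - 1) * P χ k ℓ x =
      Complex.Gamma (-s) / DirichletCharacter.LFunction χ ((ℓ : ℂ) * s + (k : ℂ)) := by

  have hre : 1 < ((ℓ : ℂ) * s + (k : ℂ)).re := by
    simp only [add_re, re_ofReal_mul, ofReal_re]
    rw [div_lt_iff₀ hℓ] at hs1
    nlinarith
  set w : ℂ := (ℓ : ℂ) * s + (k : ℂ) with hw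
  have hμ : LSeriesSummable ((fun n : ℕ => χ (n : ZMod q)) *
      fun n : ℕ => ((ArithmeticFunction.moebius n : ℤ) : ℂ)) w :=
    DirichletCharacter.LSeriesSummable_mul χ
      (ArithmeticFunction.LSeriesSummable_moebius_iff.mpr hre)
  let a : ℕ → ℂ := fun n => χ (n : ZMod q) * (ArithmeticFunction.moebius n : ℂ) *
    (((n : ℝ) ^ (-k) : ℝ) : ℂ)
  let p : ℕ → ℝ := fun n => (n : ℝ) ^ (-ℓ)
  have ha0 : a 0 = 0 := by simp [a]
  have hp : ∀ n, a n = 0 ∨ 0 < p n := by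
    intro n
    rcases Nat.eq_zero_or_pos n with rfl | hn
    · exact Or.inl ha0
    · exact Or.inr (Real.rpow_pos_of_pos (by exact_mod_cast hn) _)
  have hterm : ∀ n, a n / (p n : ℂ) ^ (-s) = LSeries.term ((fun n : ℕ => χ (n : ZMod q)) *
      fun n : ℕ => ((ArithmeticFunction.moebius n : ℤ) : ℂ)) w n := by
    intro n
    rcases Nat.eq_zero_or_pos n with rfl | hn
    · simp [ha0]
    · have hn' : (0 : ℝ) < n := by exact_mod_cast hn
      have hnc : (n : ℂ) ≠ 0 := by exact_mod_cast hn.ne'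
      rw [LSeries.term_of_ne_zero hn.ne']
      have e1 : ((p n : ℝ) : ℂ) ^ (-s) = (n : ℂ) ^ ((ℓ : ℂ) * s) := by
        simp only [p]
        rw [← cpow_mul_ofReal_nonneg hn'.le, ofReal_natCast]
        congr 1
        push_cast
        ring
      have e2 : (((n : ℝ) ^ (-k) : ℝ) : ℂ) = ((n : ℂ) ^ (k : ℂ))⁻¹ := by
        rw [ofReal_cpow hn'.le, ofReal_neg, cpow_neg, ofReal_natCast]
      simp only [a, Pi.mul_apply]
      rw [e1, e2, hw, cpow_add _ _ hnc]
      simp only [div_eq_mul_inv, mul_inv]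
      ring
  have hPsum : ∀ t ∈ Set.Ioi (0 : ℝ), HasSum (fun n => a n * Real.exp (-p n * t)) (P χ k ℓ t) := by
    intro t ht
    have ht : 0 < t := ht
    have heq : (fun n : ℕ => a n * (Real.exp (-p n * t) : ℂ)) = fun n : ℕ =>
        χ (n : ZMod q) * (ArithmeticFunction.moebius n : ℂ) *
        (((n : ℝ) ^ (-k) * Real.exp (-t / (n : ℝ) ^ ℓ) : ℝ) : ℂ) := by
      funext n
      have : -p n * t = -t / (n : ℝ) ^ ℓ := by
        simp only [p]
        rw [Real.rpow_neg (Nat.cast_nonneg n)]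
        ring
      rw [this]
      simp only [a]
      push_cast
      ring
    have hs : Summable (fun n : ℕ => a n * (Real.exp (-p n * t) : ℂ)) := by
      refine Summable.of_norm_bounded (Real.summable_nat_rpow.mpr (by linarith : -k < -1)) ?_
      intro n
      have hk0 : 0 ≤ (n : ℝ) ^ (-k) := Real.rpow_nonneg (Nat.cast_nonneg n) _
      have h1 : ‖χ (n : ZMod q)‖ ≤ 1 := χ.norm_le_one _
      have h2 : ‖((ArithmeticFunction.moebius n : ℤ) : ℂ)‖ ≤ 1 := by
        rw [Complex.norm_intCast]
        exact_mod_cast ArithmeticFunction.abs_moebius_le_one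
      have h3 : Real.exp (-p n * t) ≤ 1 := by
        rw [Real.exp_le_one_iff]
        have : 0 ≤ p n := Real.rpow_nonneg (Nat.cast_nonneg n) _
        nlinarith
      simp only [a, norm_mul, Complex.norm_real, Real.norm_eq_abs, abs_of_nonneg hk0, Real.abs_exp]
      calc _ ≤ 1 * 1 * (n : ℝ) ^ (-k) * 1 := by gcongr
        _ = _ := by ring
    have := hs.hasSum
    rw [heq] at this ⊢
    exact this
  have hsum : Summable fun n => ‖a n‖ / p n ^ (-s).re := by
    refine hμ.norm.congr ?_
    intro n
    rw [← hterm]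
    rcases hp n with h | h
    · simp [h]
    · rw [norm_div, norm_cpow_eq_rpow_re_of_pos h]
  have key := hasSum_mellin (s := -s) hp (by simpa using hs2) hPsum hsum
  have hL := DirichletCharacter.LSeries.mul_mu_eq_one χ hre
  have hLne := DirichletCharacter.LSeries_ne_zero_of_one_lt_re χ hre
  have hint : ∫ x in Set.Ioi (0 : ℝ), (x : ℂ) ^ (-s - 1) * P χ k ℓ x =
      Complex.Gamma (-s) / DirichletCharacter.LFunction χ w := by
    have h1 : mellin (P χ k ℓ) (-s) =
      ∫ x in Set.Ioi (0 : ℝ), (x : ℂ) ^ (-s - 1) * P χ k ℓ x := by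
      simp only [mellin, smul_eq_mul]
    rw [← h1, ← key.tsum_eq, DirichletCharacter.LFunction_eq_LSeries χ hre]
    simp only [mul_div_assoc, hterm]
    rw [div_eq_mul_inv]
    rw [tsum_mul_left]
    congr 1
    exact eq_inv_of_mul_eq_one_right hL
  refine ⟨?_, hint⟩
  by_contra hni
  have h0 := MeasureTheory.integral_undef hni
  rw [h0, DirichletCharacter.LFunction_eq_LSeries χ hre] at hint
  exact div_ne_zero (Complex.Gamma_ne_zero_of_re_pos (by simpa using hs2)) hLne hint.symm
end

section
/- Let q > 1 be an integer, let χ be a primitive Dirichlet character modulo q, and let m ≥ 2 be an integer such that χ(−1) = (−1)^m. Then ((m−2)!·q^{m−2}·G(χ))/(2^{m−1}·π^{m−2}·i^{m−2}) · L(m−1, χ̄) = L'(2−m, χ), where L'(·, χ) denotes the derivative of the function s ↦ L(s,χ) and χ̄ is the complex conjugate character of χ. -/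
open Complex

/-- The Gauss sum `G(χ) = ∑_{n=1}^{q} χ(n) e^{2πin/q}`. -/
noncomputable def gaussG {q : ℕ} (χ : DirichletCharacter ℂ q) : ℂ :=
  ∑ n ∈ Finset.Icc 1 q, χ (n : ZMod q) * Complex.exp (2 * Real.pi * I * n / q)

lemma gaussG_eq_gaussSum {q : ℕ} [NeZero q] (χ : DirichletCharacter ℂ q) :
    gaussG χ = gaussSum χ ZMod.stdAddChar := by
  unfold gaussG gaussSum
  symm
  refine Finset.sum_bij' (fun (a : ZMod q) _ ↦ if a.val = 0 then q else a.val)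
    (fun n _ ↦ (n : ZMod q)) ?_ ?_ ?_ ?_ ?_
  · intro a _
    have := ZMod.val_lt a
    have := NeZero.pos q
    rw [Finset.mem_Icc]
    split_ifs <;> omega
  · intros; simp
  · intro a _
    split_ifs with h
    · rw [ZMod.natCast_self]; exact ((ZMod.val_eq_zero a).mp h).symm
    · exact ZMod.natCast_zmod_val a
  · intro n hn
    rw [Finset.mem_Icc] at hn
    rw [ZMod.val_natCast]
    rcases hn.2.eq_or_lt with h | h
    · simp [h]
    · rw [Nat.mod_eq_of_lt h, if_neg (by omega)]
  · intro a _
    have hq : (q : ℂ) ≠ 0 := NeZero.ne _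
    split_ifs with h
    · have h0 := (ZMod.val_eq_zero a).mp h
      subst h0
      rw [ZMod.natCast_self, AddChar.map_zero_eq_one, mul_div_assoc, div_self hq, mul_one, mul_one,
        Complex.exp_two_pi_mul_I, mul_one]
    · rw [ZMod.natCast_zmod_val, ZMod.stdAddChar_apply, ZMod.toCircle_apply]

lemma LFunction_const_mul' {q : ℕ} [NeZero q] (c : ℂ) (Φ : ZMod q → ℂ) (s : ℂ) :
    ZMod.LFunction (fun x ↦ c * Φ x) s = c * ZMod.LFunction Φ s := by
  simp only [ZMod.LFunction, Finset.mul_sum]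
  refine Finset.sum_congr rfl fun _ _ ↦ ?_
  ring

open scoped ZMod in
lemma LFunction_fe {q : ℕ} [NeZero q] (hq : 1 < q)
    (χ : DirichletCharacter ℂ q) (hχ : χ.IsPrimitive) {s : ℂ} (hs : 0 < s.re) :
    DirichletCharacter.LFunction χ (1 - s) =
      ((q : ℂ) ^ (s - 1) * (2 * Real.pi) ^ (-s) * Gamma s * gaussG χ *
        DirichletCharacter.LFunction χ⁻¹ s) *
      (χ (-1) * cexp (Real.pi * I * s / 2) + cexp (-Real.pi * I * s / 2)) := by
  have hsq : χ (-1) * χ (-1) = 1 := by rw [← map_mul]; simp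
  have hinv : χ⁻¹ (-1) = χ (-1) := by
    have : χ (-1) * χ⁻¹ (-1) = 1 := by
      rw [← MulChar.mul_apply, mul_inv_cancel, MulChar.one_apply (isUnit_one.neg)]
    calc χ⁻¹ (-1) = (χ (-1) * χ (-1)) * χ⁻¹ (-1) := by rw [hsq, one_mul]
      _ = χ (-1) * (χ (-1) * χ⁻¹ (-1)) := by ring
      _ = _ := by rw [this, mul_one]
  have h1 : 𝓕 (χ : ZMod q → ℂ) = fun j ↦ (χ (-1) * gaussG χ) * χ⁻¹ j := by
    ext j
    rw [hχ.fourierTransform_eq_inv_mul_gaussSum, ← neg_one_mul j, map_mul, hinv,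
      gaussG_eq_gaussSum]
    ring
  have h2 : 𝓕 (fun x ↦ χ (-x)) = fun j ↦ gaussG χ * χ⁻¹ j := by
    have : (fun x ↦ χ (-x)) = χ (-1) • (χ : ZMod q → ℂ) := by
      ext x
      rw [← neg_one_mul x, map_mul]; rfl
    rw [this, map_smul, h1]
    ext j
    simp only [Pi.smul_apply, smul_eq_mul]
    rw [← mul_assoc, ← mul_assoc, hsq, one_mul]
  have := ZMod.LFunction_one_sub (χ : ZMod q → ℂ) (s := s) ?_ (Or.inl (χ.map_zero' (by omega)))
  · rw [DirichletCharacter.LFunction, this, h1, h2, LFunction_const_mul', LFunction_const_mul',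
      DirichletCharacter.LFunction]
    ring
  · rintro n rfl
    have : (0:ℝ) ≤ n := n.cast_nonneg
    simp at hs
    linarith

theorem deriv_L_at_nonpositive_integers {q : ℕ} [NeZero q] (hq : 1 < q)
    (χ : DirichletCharacter ℂ q) (hχ : χ.IsPrimitive) (m : ℕ) (hm : 2 ≤ m)
    (hpar : χ (-1 : ZMod q) = (-1 : ℂ) ^ m) :
    ((m - 2).factorial : ℂ) * (q : ℂ) ^ (m - 2) * gaussG χ /
        (2 ^ (m - 1) * (Real.pi : ℂ) ^ (m - 2) * I ^ (m - 2)) *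
        DirichletCharacter.LFunction (χ.ringHomComp (starRingEnd ℂ)) ((m : ℂ) - 1) =
      deriv (DirichletCharacter.LFunction χ) (2 - (m : ℂ)) := by
  obtain ⟨k, rfl⟩ := Nat.exists_eq_add_of_le' hm
  have hne : χ ≠ 1 := by
    rintro rfl
    rw [DirichletCharacter.IsPrimitive, DirichletCharacter.conductor_one] at hχ
    omega
  have hbar : χ.ringHomComp (starRingEnd ℂ) = χ⁻¹ := by
    ext a
    rw [MulChar.ringHomComp_apply, ← MulChar.star_eq_inv]
    rfl
  have hq0 : (q : ℂ) ≠ 0 := NeZero.ne _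
  have hpi : (Real.pi : ℂ) ≠ 0 := by exact_mod_cast Real.pi_ne_zero
  rw [hbar]
  set n : ℂ := (k : ℂ) + 1 with hn
  have e1 : (((k + 2 : ℕ) : ℂ)) - 1 = n := by push_cast; ring
  have e2 : 2 - (((k + 2 : ℕ) : ℂ)) = 1 - n := by push_cast; ring
  rw [e1, e2]
  have hnre : 0 < n.re := by simp [hn]; positivity
  set A : ℂ → ℂ := fun s ↦ (q : ℂ) ^ (s - 1) * (2 * Real.pi) ^ (-s) * Gamma s * gaussG χ *
        DirichletCharacter.LFunction χ⁻¹ s with hA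
  set E : ℂ → ℂ := fun s ↦
    χ (-1) * cexp (Real.pi * I * s / 2) + cexp (-Real.pi * I * s / 2) with hE
  have hAd : DifferentiableAt ℂ A n := by
    have g : DifferentiableAt ℂ Gamma n := by
      refine Complex.differentiableAt_Gamma _ fun j hj ↦ ?_
      rw [hj] at hnre
      have : (0:ℝ) ≤ j := j.cast_nonneg
      simp at hnre
      linarith
    have l : DifferentiableAt ℂ (DirichletCharacter.LFunction χ⁻¹) n :=
      DirichletCharacter.differentiableAt_LFunction _ _ (Or.inr (by simpa using hne))
    have c1 : DifferentiableAt ℂ (fun s : ℂ ↦ (q : ℂ) ^ (s - 1)) n :=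
      DifferentiableAt.const_cpow (by fun_prop) (Or.inl hq0)
    have c2 : DifferentiableAt ℂ (fun s : ℂ ↦ (2 * Real.pi : ℂ) ^ (-s)) n :=
      DifferentiableAt.const_cpow (by fun_prop) (Or.inl (by simp [hpi]))
    exact (((c1.mul c2).mul g).mul_const _).mul l
  have x1 : cexp (Real.pi * I * n / 2) = I ^ (k + 1) := by
    rw [show (Real.pi * I * n / 2 : ℂ) = ((k + 1 : ℕ) : ℂ) * (Real.pi / 2 * I) by
      rw [hn]; push_cast; ring, Complex.exp_nat_mul, Complex.exp_pi_div_two_mul_I]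
  have x2 : cexp (-Real.pi * I * n / 2) = (-I) ^ (k + 1) := by
    rw [show (-Real.pi * I * n / 2 : ℂ) = ((k + 1 : ℕ) : ℂ) * (-Real.pi / 2 * I) by
      rw [hn]; push_cast; ring, Complex.exp_nat_mul, Complex.exp_neg_pi_div_two_mul_I]
  have hEn : E n = 0 := by
    simp only [hE]
    rw [x1, x2, hpar, neg_pow I]
    ring
  have hEd : HasDerivAt E (-(Real.pi * I * (-I) ^ (k + 1))) n := by
    have a1 : HasDerivAt (fun s : ℂ ↦ Real.pi * I * s / 2) (Real.pi * I * 1 / 2) n :=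
      ((hasDerivAt_id n).const_mul _).div_const _
    have a2 : HasDerivAt (fun s : ℂ ↦ -Real.pi * I * s / 2) (-Real.pi * I * 1 / 2) n :=
      ((hasDerivAt_id n).const_mul _).div_const _
    have := (a1.cexp.const_mul (χ (-1))).add a2.cexp
    refine this.congr_deriv ?_
    rw [x1, x2, hpar, neg_pow I]
    ring
  have hD := hAd.hasDerivAt.mul hEd
  rw [hEn, mul_zero, zero_add] at hD
  have hev : (fun s ↦ DirichletCharacter.LFunction χ (1 - s)) =ᶠ[nhds n] (A * E) := by
    have : {s : ℂ | 0 < s.re} ∈ nhds n :=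
      (isOpen_lt continuous_const Complex.continuous_re).mem_nhds hnre
    filter_upwards [this] with s hs
    exact LFunction_fe hq χ hχ hs
  have hD2 := (hD.congr_of_eventuallyEq hev).deriv
  rw [deriv_comp_const_sub] at hD2
  rw [← neg_neg (deriv _ _), hD2]
  simp only [hA]
  rw [hn, Complex.Gamma_nat_eq_factorial, add_sub_cancel_right, Complex.cpow_natCast,
    Complex.cpow_neg, show ((k : ℂ) + 1) = ((k + 1 : ℕ) : ℂ) by push_cast; rfl,
    Complex.cpow_natCast, show k + 2 - 2 = k by omega, show k + 2 - 1 = k + 1 by omega]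
  have hI : (-I) ^ k * I ^ k = 1 := by rw [← mul_pow]; simp
  have hI0 : I ^ k ≠ 0 := pow_ne_zero _ I_ne_zero
  have hI1 : (-I) ^ k = (I ^ k)⁻¹ := eq_inv_of_mul_eq_one_left hI
  rw [pow_succ (-I), hI1, mul_pow]
  field_simp
  rw [I_sq]
  ring
end

section
/- Let x > 0 and let c be a real number with −1 < c < 0. Then the function t ↦ Γ(c + it)·x^{−(c+it)} is integrable on ℝ and e^{−x} − 1 = (1/(2π)) ∫_{−∞}^{∞} Γ(c + it)·x^{−(c+it)} dt. -/
open Complex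

open MeasureTheory Set Filter Asymptotics Topology in
theorem aux_norm (x : ℝ) (hx : 0 < x) :
    ‖(((Real.exp (-x) - 1 : ℝ)) : ℂ)‖ ≤ 1 ∧ ‖(((Real.exp (-x) - 1 : ℝ)) : ℂ)‖ ≤ x := by
  have h1 := Real.exp_pos (-x)
  have h2 := Real.add_one_le_exp (-x)
  have h3 : Real.exp (-x) ≤ 1 := Real.exp_le_one_iff.2 (by linarith)
  rw [Complex.norm_real, Real.norm_eq_abs, abs_of_nonpos (by linarith)]
  constructor <;> linarith

open MeasureTheory Set Filter Asymptotics Topology in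
theorem aux_conv (s : ℂ) (h1 : -1 < s.re) (h2 : s.re < 0) :
    MellinConvergent (fun x : ℝ => ((Real.exp (-x) - 1 : ℝ) : ℂ)) s := by
  refine mellinConvergent_of_isBigO_rpow (a := 0) (b := -1) ?_ ?_ h2 ?_ h1
  · refine ContinuousOn.locallyIntegrableOn ?_ measurableSet_Ioi
    exact Continuous.continuousOn (by fun_prop)
  · refine IsBigO.of_bound 1 ?_
    filter_upwards [eventually_gt_atTop 0] with x hx
    simpa using (aux_norm x hx).1
  · refine IsBigO.of_bound 1 ?_
    filter_upwards [self_mem_nhdsWithin] with x hx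
    have hx' : 0 < x := hx
    have := (aux_norm x hx).2
    simp only [neg_neg, Real.rpow_one, one_mul]
    rwa [Real.norm_of_nonneg hx'.le]

open MeasureTheory Set Filter Asymptotics Topology in
theorem aux_mellin (s : ℂ) (h1 : -1 < s.re) (h2 : s.re < 0) :
    mellin (fun x : ℝ => ((Real.exp (-x) - 1 : ℝ) : ℂ)) s = Gamma s := by
  have hs0 : s ≠ 0 := by rintro rfl; simp at h2
  have hG : Gamma s = Gamma (s + 1) / s := by
    rw [Gamma_add_one s hs0]; field_simp
  have hs1 : 0 < (s + 1).re := by simp; linarith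
  have hconv := aux_conv s h1 h2
  have hgi := GammaIntegral_convergent hs1
  have key := integral_Ioi_mul_deriv_eq_deriv_mul (a := (0 : ℝ)) (a' := (0 : ℂ)) (b' := (0 : ℂ))
    (u := fun x : ℝ => ((Real.exp (-x) - 1 : ℝ) : ℂ))
    (u' := fun x : ℝ => ((-Real.exp (-x) : ℝ) : ℂ))
    (v := fun x : ℝ => (x : ℂ) ^ s / s) (v' := fun x : ℝ => (x : ℂ) ^ (s - 1)) ?_ ?_ ?_ ?_ ?_ ?_
  · rw [hG, Gamma_eq_integral hs1, GammaIntegral, mellin]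
    simp only [smul_eq_mul]
    simp_rw [mul_comm ((_ : ℂ) ^ (s - 1))]
    rw [key, sub_zero, zero_sub, ← integral_neg, ← integral_div]
    congr 1
    ext x
    push_cast
    rw [add_sub_cancel_right]
    ring
  · intro x hx
    refine HasDerivAt.ofReal_comp ?_
    simpa using ((hasDerivAt_neg x).exp).sub_const 1
  · intro x hx
    have := hasDerivAt_ofReal_cpow_const' (x := x) (ne_of_gt hx) (r := s - 1)
      (by intro h; apply hs0; linear_combination h)
    simpa using this
  · refine hconv.congr_fun ?_ measurableSet_Ioi
    intro x hx
    simp [mul_comm]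
  · refine IntegrableOn.congr_fun (hgi.div_const (-s)) ?_ measurableSet_Ioi
    intro x hx
    simp only [add_sub_cancel_right, Pi.mul_apply]
    push_cast
    field_simp
  · rw [tendsto_zero_iff_norm_tendsto_zero]
    have ht : Tendsto (fun x : ℝ => x ^ (s.re + 1) / ‖s‖) (𝓝[>] 0) (𝓝 0) := by
      have : ContinuousAt (fun x : ℝ => x ^ (s.re + 1) / ‖s‖) 0 :=
        (Real.continuousAt_rpow_const _ _ (Or.inr (by linarith))).div_const _
      have h := this.tendsto
      rw [Real.zero_rpow (by linarith), zero_div] at h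
      exact h.mono_left nhdsWithin_le_nhds
    refine squeeze_zero' (Eventually.of_forall fun _ => norm_nonneg _) ?_ ht
    filter_upwards [self_mem_nhdsWithin] with x hx
    have hx' : 0 < x := hx
    rw [Pi.mul_apply, norm_mul, norm_div, norm_cpow_eq_rpow_re_of_pos hx', Real.rpow_add_one hx'.ne',
      mul_comm (x ^ s.re), mul_div_assoc]
    gcongr
    exact (aux_norm x hx').2
  · rw [tendsto_zero_iff_norm_tendsto_zero]
    have ht : Tendsto (fun x : ℝ => x ^ (s.re) / ‖s‖) atTop (𝓝 0) := by
      have := (tendsto_rpow_neg_atTop (y := -s.re) (by linarith)).div_const ‖s‖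
      simpa using this
    refine squeeze_zero' (Eventually.of_forall fun _ => norm_nonneg _) ?_ ht
    filter_upwards [eventually_gt_atTop 0] with x hx'
    rw [Pi.mul_apply, norm_mul, norm_div, norm_cpow_eq_rpow_re_of_pos hx']
    exact mul_le_of_le_one_left (by positivity) (aux_norm x hx').1

open MeasureTheory Set in
theorem aux_Gamma_le (s : ℂ) (hs : 0 < s.re) : ‖Gamma s‖ ≤ Real.Gamma s.re := by
  rw [Gamma_eq_integral hs, GammaIntegral, Real.Gamma_eq_integral hs]
  refine (norm_integral_le_integral_norm _).trans (le_of_eq ?_)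
  refine setIntegral_congr_fun measurableSet_Ioi fun x hx => ?_
  simp only [norm_mul]
  rw [norm_cpow_eq_rpow_re_of_pos hx, Complex.norm_real, Real.norm_of_nonneg (Real.exp_pos _).le]
  simp

theorem aux_lower (a t : ℝ) (ha : |a| ≤ 1) : |a| * √(1 + t ^ 2) ≤ ‖(a : ℂ) + t * I‖ := by
  rw [Complex.norm_add_mul_I]
  apply Real.le_sqrt_of_sq_le
  rw [mul_pow, Real.sq_sqrt (by positivity), sq_abs]
  have : a ^ 2 ≤ 1 := (sq_le_one_iff_abs_le_one a).2 ha
  nlinarith [sq_nonneg t]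

theorem aux_bound (c : ℝ) (hc1 : -1 < c) (hc2 : c < 0) (t : ℝ) :
    ‖Gamma ((c : ℂ) + t * I)‖ ≤ Real.Gamma (c + 2) / (|c| * |c + 1|) * (1 + t ^ 2)⁻¹ := by
  have hs0 : (c : ℂ) + t * I ≠ 0 := by
    intro h; have := congrArg re h; simp at this; linarith
  have hs1 : (c : ℂ) + t * I + 1 ≠ 0 := by
    intro h; have := congrArg re h; simp at this; linarith
  have e : Gamma ((c : ℂ) + t * I + 1 + 1) =
      ((c : ℂ) + t * I + 1) * (((c : ℂ) + t * I) * Gamma ((c : ℂ) + t * I)) := by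
    rw [Gamma_add_one _ hs1, Gamma_add_one _ hs0]
  have hle := aux_Gamma_le ((c : ℂ) + t * I + 1 + 1) (by simp; linarith)
  rw [e, norm_mul, norm_mul] at hle
  have hre : ((c : ℂ) + t * I + 1 + 1).re = c + 2 := by simp; ring
  rw [hre] at hle
  have l1 := aux_lower c t (abs_le.2 ⟨by linarith, by linarith⟩)
  have l2 := aux_lower (c + 1) t (abs_le.2 ⟨by linarith, by linarith⟩)
  have hr : ((c + 1 : ℝ) : ℂ) + t * I = (c : ℂ) + t * I + 1 := by push_cast; ring
  rw [hr] at l2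
  have p1 : 0 < |c| := abs_pos.2 (by linarith)
  have p2 : 0 < |c + 1| := abs_pos.2 (by linarith)
  have hpos : 0 < 1 + t ^ 2 := by positivity
  rw [div_mul_eq_mul_div, ← div_eq_mul_inv, div_div, le_div_iff₀ (by positivity)]
  refine le_trans ?_ hle
  have hsq : √(1 + t ^ 2) * √(1 + t ^ 2) = 1 + t ^ 2 := Real.mul_self_sqrt hpos.le
  calc _ = (|c + 1| * √(1 + t ^ 2)) * ((|c| * √(1 + t ^ 2)) * ‖Gamma ((c : ℂ) + t * I)‖) := by
        linear_combination (-(‖Gamma ((c : ℂ) + t * I)‖ * |c| * |c + 1|)) * hsq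
    _ ≤ _ := by gcongr

open MeasureTheory in
theorem aux_int (c : ℝ) (hc1 : -1 < c) (hc2 : c < 0) :
    Integrable (fun t : ℝ => Gamma ((c : ℂ) + t * I)) := by
  refine (integrable_inv_one_add_sq.const_mul (Real.Gamma (c + 2) / (|c| * |c + 1|))).mono' ?_
    (Filter.Eventually.of_forall (aux_bound c hc1 hc2))
  refine Continuous.aestronglyMeasurable ?_
  rw [continuous_iff_continuousAt]
  intro t
  refine ContinuousAt.comp (f := fun t : ℝ => (c : ℂ) + t * I) (continuousAt_Gamma _ ?_)
    (by fun_prop)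
  intro m h
  have := congrArg re h
  simp at this
  rcases m with _ | m
  · simp at this; linarith
  · push_cast at this
    have : (0 : ℝ) ≤ m := Nat.cast_nonneg m
    linarith

theorem inverse_mellin_Gamma (x : ℝ) (hx : 0 < x) (c : ℝ) (hc1 : -1 < c) (hc2 : c < 0) :
    MeasureTheory.Integrable
      (fun t : ℝ => Complex.Gamma ((c : ℂ) + t * I) * (x : ℂ) ^ (-((c : ℂ) + t * I))) ∧
    ((Real.exp (-x) : ℝ) : ℂ) - 1 =
      (1 / (2 * Real.pi)) *
        ∫ t : ℝ, Complex.Gamma ((c : ℂ) + t * I) * (x : ℂ) ^ (-((c : ℂ) + t * I)) := by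
  have hx0 : (x : ℂ) ≠ 0 := ofReal_ne_zero.mpr hx.ne'
  constructor
  · refine (aux_int c hc1 hc2).mul_bdd (c := x ^ (-c)) ?_ ?_
    · refine Continuous.aestronglyMeasurable ?_
      exact Continuous.const_cpow (by fun_prop) (Or.inl hx0)
    · refine Filter.Eventually.of_forall fun t => ?_
      rw [norm_cpow_eq_rpow_re_of_pos hx]
      simp
  · have hm : ∀ t : ℝ, mellin (fun x : ℝ => ((Real.exp (-x) - 1 : ℝ) : ℂ)) ((c : ℂ) + t * I)
        = Gamma ((c : ℂ) + t * I) := fun t => aux_mellin _ (by simpa) (by simpa)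
    have h := mellinInv_mellin_eq c (fun x : ℝ => ((Real.exp (-x) - 1 : ℝ) : ℂ)) hx
      (aux_conv c (by simpa) (by simpa)) ?_ (Continuous.continuousAt (by fun_prop))
    · rw [mellinInv] at h
      simp_rw [hm] at h
      push_cast at h ⊢
      rw [← h]
      simp [mul_comm]
    · unfold VerticalIntegrable
      simp_rw [hm]
      exact aux_int c hc1 hc2
end

section
/- Let k ≥ 1 be a real number, let a ∈ {0,1}, let X > 0, and let d₁ be a real number with 0 < d₁ < (k+a)/2. Then the function t ↦ Γ(d₁+it)·Γ((k+a)/2 − d₁ − it)/Γ((1+a−k)/2 + d₁ + it) · X^{−(d₁+it)} is integrable on ℝ and (1/(2π)) ∫_{−∞}^{∞} Γ(d₁+it)·Γ((k+a)/2 − d₁ − it)/Γ((1+a−k)/2 + d₁ + it) · X^{−(d₁+it)} dt = (Γ((k+a)/2)/Γ(a + 1/2)) · X^{−(k+a)/2} · ₁F₁((k+a)/2; a + 1/2; −1/X). -/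
open Complex

/-- The confluent hypergeometric series `₁F₁(α; β; z) = ∑_{j≥0} (α)_j/(β)_j · z^j/j!`,
where `(c)_j` is the rising factorial. -/
noncomputable def oneF1 (α β z : ℂ) : ℂ :=
  ∑' j : ℕ, ((ascPochhammer ℂ j).eval α / (ascPochhammer ℂ j).eval β) * z ^ j /
    (j.factorial : ℂ)


open MeasureTheory Set Filter Topology

def RapDec (f : ℝ → ℂ) : Prop :=
  Continuous f ∧ ∀ n : ℕ, ∃ C : ℝ, ∀ t : ℝ, ‖f t‖ * (1 + |t|) ^ n ≤ C

lemma RapDec.integrable {f : ℝ → ℂ} (hf : RapDec f) : Integrable f := by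
  obtain ⟨C, hC⟩ := hf.2 2
  refine Integrable.mono' (integrable_inv_one_add_sq.const_mul C) hf.1.aestronglyMeasurable
    (Eventually.of_forall fun t => ?_)
  have h1 : (0 : ℝ) < 1 + t ^ 2 := by positivity
  rw [← div_eq_mul_inv, le_div_iff₀ h1]
  refine le_trans ?_ (hC t)
  gcongr
  nlinarith [abs_nonneg t, sq_abs t]

lemma RapDec.mul_bdd {f g : ℝ → ℂ} (hf : RapDec f) (hg : Continuous g) {K : ℝ}
    (hK : ∀ t, ‖g t‖ ≤ K) : RapDec (fun t => f t * g t) := by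
  refine ⟨hf.1.mul hg, fun n => ?_⟩
  obtain ⟨C, hC⟩ := hf.2 n
  refine ⟨C * K, fun t => ?_⟩
  have h0 : 0 ≤ ‖f t‖ * (1 + |t|) ^ n := by positivity
  calc ‖f t * g t‖ * (1 + |t|) ^ n = (‖f t‖ * (1 + |t|) ^ n) * ‖g t‖ := by rw [norm_mul]; ring
    _ ≤ C * K := mul_le_mul (hC t) (hK t) (norm_nonneg _) (h0.trans (hC t))

lemma RapDec.mul_lin {f : ℝ → ℂ} (hf : RapDec f) (p q : ℂ) :
    RapDec (fun t => (p + q * t) * f t) := by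
  refine ⟨(by fun_prop : Continuous fun t : ℝ => p + q * (t : ℂ)).mul hf.1, fun n => ?_⟩
  obtain ⟨C, hC⟩ := hf.2 (n + 1)
  refine ⟨(‖p‖ + ‖q‖) * C, fun t => ?_⟩
  have h1 : ‖p + q * t‖ ≤ (‖p‖ + ‖q‖) * (1 + |t|) := by
    refine (norm_add_le _ _).trans ?_
    rw [norm_mul, Complex.norm_real, Real.norm_eq_abs]
    nlinarith [mul_nonneg (norm_nonneg p) (abs_nonneg t), norm_nonneg q]
  calc ‖(p + q * t) * f t‖ * (1 + |t|) ^ n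
      ≤ ((‖p‖ + ‖q‖) * (1 + |t|)) * ‖f t‖ * (1 + |t|) ^ n := by rw [norm_mul]; gcongr
    _ = (‖p‖ + ‖q‖) * (‖f t‖ * (1 + |t|) ^ (n + 1)) := by ring
    _ ≤ _ := by gcongr; exact hC t

lemma norm_Gamma_le' {w : ℂ} (hw : 0 < w.re) : ‖Gamma w‖ ≤ Real.Gamma w.re := by
  rw [Gamma_eq_integral hw, Real.Gamma_eq_integral hw, GammaIntegral]
  refine (norm_integral_le_integral_norm _).trans (le_of_eq ?_)
  refine setIntegral_congr_fun measurableSet_Ioi fun x hx => ?_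
  simp only [mem_Ioi] at hx
  simp [norm_cpow_eq_rpow_re_of_pos hx, Complex.norm_exp]

lemma continuous_Gamma_line {c : ℝ} (hc : 0 < c) (q : ℂ) (hq : q.re = 0) :
    Continuous (fun t : ℝ => Gamma (c + t * q)) := by
  rw [continuous_iff_continuousAt]
  intro t
  have : ContinuousAt Gamma ((c : ℂ) + t * q) := by
    apply ContinuousAt.comp (x := ((c : ℂ) + t * q)) (g := Gamma) (f := id) _ continuousAt_id
    refine (differentiableAt_Gamma _ fun m h => ?_).continuousAt
    have := congrArg re h
    simp [hq] at this
    have h2 : (0 : ℝ) ≤ m := Nat.cast_nonneg m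
    linarith
  exact ContinuousAt.comp (f := fun t : ℝ => (c : ℂ) + t * q) this (by fun_prop)

lemma rapDec_Gamma {c : ℝ} (hc : 0 < c) : RapDec (fun t : ℝ => Gamma (c + t * I)) := by
  refine ⟨continuous_Gamma_line hc I (by simp), fun n => ?_⟩
  induction n generalizing c with
  | zero =>
    refine ⟨Real.Gamma c, fun t => ?_⟩
    have := norm_Gamma_le' (w := c + t * I) (by simpa using hc)
    simpa using this
  | succ n ih =>
    obtain ⟨C, hC⟩ := ih (c := c + 1) (by linarith)
    refine ⟨(1 / c + 1) * C, fun t => ?_⟩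
    have hre : ((c : ℂ) + t * I).re = c := by simp
    have him : ((c : ℂ) + t * I).im = t := by simp
    have hne : (c : ℂ) + t * I ≠ 0 := fun h => by rw [h] at hre; simp at hre; linarith
    have h1 := Gamma_add_one _ hne
    have h2 : c ≤ ‖(c : ℂ) + t * I‖ := by
      have := abs_re_le_norm ((c : ℂ) + t * I); rw [hre, abs_of_pos hc] at this; exact this
    have h3 : |t| ≤ ‖(c : ℂ) + t * I‖ := by
      have := abs_im_le_norm ((c : ℂ) + t * I); rw [him] at this; exact this
    have h4 : 1 + |t| ≤ (1 / c + 1) * ‖(c : ℂ) + t * I‖ := by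
      have : 1 ≤ 1 / c * ‖(c : ℂ) + t * I‖ := by
        rw [one_div, ← div_eq_inv_mul, le_div_iff₀ hc]; linarith
      linarith
    have h5 := hC t
    beta_reduce at h5 ⊢
    rw [show (((c + 1 : ℝ) : ℂ) + t * I) = c + t * I + 1 by push_cast; ring, h1, norm_mul] at h5
    calc ‖Gamma (c + t * I)‖ * (1 + |t|) ^ (n + 1)
        = ‖Gamma (c + t * I)‖ * (1 + |t|) ^ n * (1 + |t|) := by ring
      _ ≤ ‖Gamma (c + t * I)‖ * (1 + |t|) ^ n * ((1 / c + 1) * ‖(c : ℂ) + t * I‖) := by gcongr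
      _ = (1 / c + 1) * (‖(c : ℂ) + t * I‖ * ‖Gamma (c + t * I)‖ * (1 + |t|) ^ n) := by ring
      _ ≤ _ := by gcongr

/-- the Barnes integrand without the power -/
noncomputable def barF (A B c : ℝ) (t : ℝ) : ℂ :=
  Gamma (c + t * I) * (Gamma (A - (c + t * I)) * (Gamma (B - (c + t * I)))⁻¹)

lemma continuous_ratio {A B c : ℝ} (hc : c < A) : Continuous fun t : ℝ =>
    (Gamma (A - (c + t * I)) * (Gamma (B - (c + t * I)))⁻¹) := by
  refine Continuous.mul ?_ ?_
  · have := continuous_Gamma_line (c := A - c) (by linarith) (-I) (by simp)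
    convert this using 3
    push_cast; ring
  · exact differentiable_one_div_Gamma.continuous.comp (by fun_prop)

lemma ratio_eq {A B c : ℝ} (hc : c < A) (hB : A < B) (t : ℝ) :
    (Gamma (A - (c + t * I)) * (Gamma (B - (c + t * I)))⁻¹) =
     (Gamma ((B - A : ℝ) : ℂ))⁻¹ * betaIntegral (A - (c + t * I)) ((B - A : ℝ) : ℂ) := by
  have h1 : 0 < (A - (c + t * I) : ℂ).re := by simp; linarith
  have h2 : 0 < ((B - A : ℝ) : ℂ).re := by simp; linarith
  have h := Gamma_mul_Gamma_eq_betaIntegral h1 h2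
  rw [show (A - (c + t * I) : ℂ) + ((B - A : ℝ) : ℂ) = B - (c + t * I) by push_cast; ring] at h
  have h3 : Gamma (B - (c + t * I)) ≠ 0 := Gamma_ne_zero_of_re_pos (by simp; linarith)
  have h4 := Gamma_ne_zero_of_re_pos h2
  field_simp
  rw [mul_comm] at h
  linear_combination h

lemma norm_beta_integrand {u : ℝ} (hu : u ∈ Ioo (0:ℝ) 1) (p q : ℂ) :
    ‖(u : ℂ) ^ (p - 1) * (1 - (u : ℂ)) ^ (q - 1)‖ = u ^ (p.re - 1) * (1 - u) ^ (q.re - 1) := by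
  rw [norm_mul, norm_cpow_eq_rpow_re_of_pos hu.1, ← ofReal_one, ← ofReal_sub,
    norm_cpow_eq_rpow_re_of_pos (by linarith [hu.2])]
  simp

lemma norm_beta_le (p q : ℂ) : ‖betaIntegral p q‖ ≤
    ∫ u in Ioo (0:ℝ) 1, u ^ (p.re - 1) * (1 - u) ^ (q.re - 1) := by
  rw [betaIntegral, intervalIntegral.integral_of_le zero_le_one, integral_Ioc_eq_integral_Ioo]
  refine (norm_integral_le_integral_norm _).trans (le_of_eq ?_)
  exact setIntegral_congr_fun measurableSet_Ioo fun x hx => norm_beta_integrand hx p q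

lemma rapDec_barF (m : ℕ) {A B c : ℝ} (hc0 : 0 < c) (hc : c < A) (hm : A < B + m) :
    RapDec (barF A B c) := by
  induction m generalizing B with
  | zero =>
    simp at hm
    refine (rapDec_Gamma hc0).mul_bdd (continuous_ratio hc)
      (K := ‖(Gamma ((B - A : ℝ) : ℂ))⁻¹‖ * 
       ∫ u in Ioo (0:ℝ) 1, u ^ (A - c - 1) * (1 - u) ^ (B - A - 1)) fun t => ?_
    rw [ratio_eq hc hm, norm_mul]
    gcongr
    have := norm_beta_le (A - (c + t * I)) ((B - A : ℝ) : ℂ)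
    simpa using this
  | succ m ih =>
    have h := (ih (B := B + 1) (by push_cast at hm; linarith)).mul_lin (B - c) (-I)
    convert h using 2 with t
    simp only [barF]
    have := one_div_Gamma_eq_self_mul_one_div_Gamma_add_one (B - (c + t * I))
    rw [this]
    push_cast
    rw [show (B : ℂ) + 1 - (c + t * I) = B - (c + t * I) + 1 by ring]
    ring

lemma continuous_pow_line {x : ℝ} (hx : 0 < x) (c : ℝ) :
    Continuous fun t : ℝ => (x : ℂ) ^ (-((c : ℂ) + t * I)) := by
  refine Continuous.const_cpow (by fun_prop) (Or.inl (by exact_mod_cast hx.ne'))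

lemma norm_pow_line {x : ℝ} (hx : 0 < x) (c t : ℝ) :
    ‖(x : ℂ) ^ (-((c : ℂ) + t * I))‖ = x ^ (-c) := by
  rw [norm_cpow_eq_rpow_re_of_pos hx]; simp

lemma RapDec.mul_pow {f : ℝ → ℂ} (hf : RapDec f) {x : ℝ} (hx : 0 < x) (c : ℝ) :
    RapDec fun t => f t * (x : ℂ) ^ (-((c : ℂ) + t * I)) :=
  hf.mul_bdd (continuous_pow_line hx c) fun t => (norm_pow_line hx c t).le

lemma cahen_mellin {x c : ℝ} (hx : 0 < x) (hc : 0 < c) :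
    ∫ t : ℝ, Gamma (c + t * I) * (x : ℂ) ^ (-((c : ℂ) + t * I)) = 2 * Real.pi * Real.exp (-x) := by
  have hm : ∀ s : ℂ, 0 < s.re → mellin (fun x : ℝ => ((Real.exp (-x) : ℝ) : ℂ)) s = Gamma s := by
    intro s hs
    rw [Gamma_eq_integral hs, GammaIntegral_eq_mellin]
  have hline : ∀ t : ℝ, mellin (fun x : ℝ => ((Real.exp (-x) : ℝ) : ℂ)) (c + t * I) =
    Gamma (c + t * I) := fun t => hm _ (by simpa using hc)
  have h := mellinInv_mellin_eq c (fun x : ℝ => ((Real.exp (-x) : ℝ) : ℂ)) hx ?_ ?_ ?_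
  · rw [mellinInv] at h
    simp only [hline, smul_eq_mul] at h
    rw [← h]
    simp only [mul_comm]
    have : (Real.pi : ℂ) ≠ 0 := by exact_mod_cast Real.pi_ne_zero
    simp
    field_simp
  · have := GammaIntegral_convergent (s := c) (by simpa using hc)
    rw [MellinConvergent]
    simpa only [smul_eq_mul, mul_comm] using this
  · rw [VerticalIntegrable]
    simp only [hline]
    exact (rapDec_Gamma hc).integrable
  · fun_prop

noncomputable def cf (A B : ℝ) (j : ℕ) : ℝ :=
  Real.Gamma (A + j) / Real.Gamma (B + j) * (-1) ^ j / j.factorial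

lemma abs_cf_le {A B : ℝ} (hA : 0 < A) (hB : 0 < B) (j : ℕ) :
    |cf A B j| ≤ Real.Gamma A / Real.Gamma B * ((1 + A / B) ^ j / j.factorial) := by
  have hG : ∀ z : ℝ, 0 < z → ∀ j : ℕ, 0 < Real.Gamma (z + j) := fun z hz j =>
    Real.Gamma_pos_of_pos (by positivity)
  have key : Real.Gamma (A + j) / Real.Gamma (B + j) ≤
      Real.Gamma A / Real.Gamma B * (1 + A / B) ^ j := by
    induction j with
    | zero => simp
    | succ j ih =>
      have hj : (0 : ℝ) ≤ j := Nat.cast_nonneg j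
      have e : ∀ z : ℝ, 0 < z → Real.Gamma (z + (j + 1 : ℕ)) = (z + j) * Real.Gamma (z + j) := by
        intro z hz
        rw [← Real.Gamma_add_one (by positivity)]
        push_cast; ring_nf
      rw [e A hA, e B hB, mul_div_mul_comm, pow_succ, ← mul_assoc, mul_comm]
      have h1 : (A + j) / (B + j) ≤ 1 + A / B := by
        rw [div_le_iff₀ (by positivity)]
        have : A / B * B = A := by field_simp
        have h2 : 0 ≤ A / B * j := by positivity
        nlinarith
      have := hG A hA j
      have := hG B hB j
      have := Real.Gamma_pos_of_pos hA
      have := Real.Gamma_pos_of_pos hB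
      gcongr
  rw [cf, abs_div, abs_mul, abs_pow, abs_neg, abs_one, one_pow, mul_one, Nat.abs_cast,
    abs_of_pos (div_pos (hG A hA j) (hG B hB j)), ← mul_div_assoc]
  gcongr

lemma summable_abs_cf {A B : ℝ} (hA : 0 < A) (hB : 0 < B) {R : ℝ} (hR : 0 ≤ R) :
    Summable fun j => |cf A B j| * R ^ j := by
  have h := (Real.summable_pow_div_factorial ((1 + A / B) * R)).mul_left
    (Real.Gamma A / Real.Gamma B)
  refine Summable.of_nonneg_of_le (fun j => by positivity) (fun j => ?_) h
  calc |cf A B j| * R ^ j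
      ≤ (Real.Gamma A / Real.Gamma B * ((1 + A / B) ^ j / j.factorial)) * R ^ j := by
        gcongr; exact abs_cf_le hA hB j
    _ = _ := by rw [mul_pow]; ring

lemma cf_step {A B : ℝ} (hB : 0 < B) (j : ℕ) :
    cf A B j = (B + j) * cf A (B + 1) j := by
  have h : Real.Gamma (B + 1 + j) = (B + j) * Real.Gamma (B + j) := by
    rw [← Real.Gamma_add_one (by positivity)]; ring_nf
  have h2 : Real.Gamma (B + j) ≠ 0 := (Real.Gamma_pos_of_pos (by positivity)).ne'
  have h3 : B + j ≠ 0 := by positivity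
  rw [cf, cf, h]
  field_simp

lemma hasDerivAt_series {A B : ℝ} (hA : 0 < A) (hB : 0 < B) {x : ℝ} (hx : 0 < x) :
    HasDerivAt (fun y : ℝ => ∑' j, cf A B j * y ^ j)
      (∑' j, cf A B j * (j * x ^ (j - 1))) x ∧
    Summable (fun j : ℕ => cf A B j * (j * x ^ (j - 1))) := by
  have hs : Summable fun j : ℕ => |cf A B j| * (j * (2 * x) ^ (j - 1)) := by
    have h := (summable_abs_cf hA hB (R := 2 * (2 * x)) (by positivity)).mul_left (1 / (2 * x))
    refine Summable.of_nonneg_of_le (fun j => by positivity) (fun j => ?_) h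
    rcases j with _ | j
    · simp; positivity
    · have : ((j + 1 : ℕ) : ℝ) ≤ 2 ^ (j + 1) := by exact_mod_cast Nat.lt_two_pow_self.le
      simp only [Nat.add_sub_cancel]
      calc |cf A B (j+1)| * (((j + 1 : ℕ) : ℝ) * (2 * x) ^ j)
          ≤ |cf A B (j+1)| * (2 ^ (j + 1) * (2 * x) ^ j) := by gcongr
        _ = _ := by rw [mul_pow 2 (2 * x), pow_succ (2 * x)]; field_simp
  have hb : ∀ (n : ℕ) (y : ℝ), y ∈ Ioo 0 (2 * x) →
      ‖cf A B n * (n * y ^ (n - 1))‖ ≤ |cf A B n| * (n * (2 * x) ^ (n - 1)) := by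
    intro n y hy
    have := hy.1.le
    rw [norm_mul, Real.norm_eq_abs, Real.norm_of_nonneg (by positivity)]
    gcongr
    exact hy.2.le
  have hxm : x ∈ Ioo 0 (2 * x) := ⟨hx, by linarith⟩
  refine ⟨hasDerivAt_tsum_of_isPreconnected hs isOpen_Ioo isPreconnected_Ioo
    (fun n y _ => (hasDerivAt_pow n y).const_mul _) hb hxm ?_ hxm,
    Summable.of_norm_bounded hs fun n => hb n x hxm⟩
  refine Summable.of_norm_bounded (summable_abs_cf hA hB hx.le) fun j => ?_
  rw [norm_mul, Real.norm_eq_abs, Real.norm_of_nonneg (by positivity)]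

lemma series_step {A B : ℝ} (hA : 0 < A) (hB : 0 < B) {x : ℝ} (hx : 0 < x) :
    ∑' j, cf A B j * x ^ j = B * (∑' j, cf A (B + 1) j * x ^ j) +
      x * ∑' j, cf A (B + 1) j * (j * x ^ (j - 1)) := by
  have hB' : 0 < B + 1 := by linarith
  have h1 : Summable fun j => cf A (B + 1) j * x ^ j :=
    Summable.of_norm_bounded (summable_abs_cf hA hB' hx.le) fun j => by
      rw [norm_mul, Real.norm_eq_abs, Real.norm_of_nonneg (by positivity)]
  have h2 := (hasDerivAt_series hA hB' hx).2
  rw [← tsum_mul_left, ← tsum_mul_left, ← (h1.mul_left B).tsum_add (h2.mul_left x)]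
  congr 1; ext j
  rw [cf_step hB]
  rcases j with _ | j
  · simp
  · simp only [Nat.add_sub_cancel, pow_succ]; ring

lemma hasDerivAt_barnes {f : ℝ → ℂ} (hf : RapDec f) (c : ℝ) {x : ℝ} (hx : 0 < x) :
    HasDerivAt (fun y : ℝ => ∫ t : ℝ, f t * (y : ℂ) ^ (-((c : ℂ) + t * I)))
      (∫ t : ℝ, ((-c + (-I) * t) * f t) * ((x : ℂ) ^ (-((c : ℂ) + t * I)) * (x : ℂ)⁻¹)) x := by
  have hg := hf.mul_lin (-c) (-I)
  obtain ⟨M, hM⟩ : ∃ M : ℝ, ∀ y ∈ Icc (x / 2) (2 * x), y ^ (-c) * y⁻¹ ≤ M := by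
    have : ContinuousOn (fun y : ℝ => y ^ (-c) * y⁻¹) (Icc (x / 2) (2 * x)) := by
      intro y hy
      have hy0 : y ≠ 0 := by have := hy.1; intro h; linarith
      exact ((Real.continuousAt_rpow_const y (-c) (Or.inl hy0)).mul
        (continuousAt_inv₀ hy0)).continuousWithinAt
    obtain ⟨M, hM⟩ := isCompact_Icc.bddAbove_image this
    exact ⟨M, fun y hy => hM ⟨y, hy, rfl⟩⟩
  refine (hasDerivAt_integral_of_dominated_loc_of_deriv_le
    (F := fun (y : ℝ) (t : ℝ) => f t * (y : ℂ) ^ (-((c : ℂ) + t * I)))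
    (F' := fun (y : ℝ) (t : ℝ) =>
      ((-c + (-I) * t) * f t) * ((y : ℂ) ^ (-((c : ℂ) + t * I)) * (y : ℂ)⁻¹))
    (bound := fun t => ‖(-c + (-I) * t) * f t‖ * M)
    (s := Icc (x / 2) (2 * x)) (Icc_mem_nhds (by linarith) (by linarith))
    ?_ (hf.mul_pow hx c).integrable ?_ ?_ ?_ ?_).2
  · filter_upwards [lt_mem_nhds hx] with y hy
    exact (hf.mul_pow hy c).1.aestronglyMeasurable
  · exact (hg.1.mul ((continuous_pow_line hx c).mul continuous_const)).aestronglyMeasurable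
  · refine Eventually.of_forall fun t y hy => ?_
    have hy0 : 0 < y := by have := hy.1; linarith
    rw [norm_mul, norm_mul ((y : ℂ) ^ _), norm_pow_line hy0, norm_inv, norm_real,
      Real.norm_of_nonneg hy0.le]
    exact mul_le_mul_of_nonneg_left (hM y hy) (norm_nonneg _)
  · exact hg.integrable.norm.mul_const M
  · refine Eventually.of_forall fun t y hy => ?_
    have hy0 : 0 < y := by have := hy.1; linarith
    have hyc : (y : ℂ) ≠ 0 := by exact_mod_cast hy0.ne'
    have h1 := (hasDerivAt_id (y : ℂ)).cpow_const (c := -((c : ℂ) + t * I))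
      (ofReal_mem_slitPlane.2 hy0)
    have h2 := (h1.comp_ofReal).const_mul (f t)
    refine HasDerivAt.congr_deriv (f := fun y : ℝ => f t * (y : ℂ) ^ (-((c : ℂ) + t * I))) h2 ?_
    simp only [id]
    rw [cpow_sub _ _ hyc, cpow_one]
    ring

/-- the descent step -/
lemma barnes_step {A B c : ℝ} (hB : 0 < B) (hc0 : 0 < c) (hc : c < A)
    (h : ∀ x : ℝ, 0 < x → ∫ t : ℝ, barF A (B + 1) c t * (x : ℂ) ^ (-((c : ℂ) + t * I)) =
      2 * Real.pi * ((∑' j, cf A (B + 1) j * x ^ j : ℝ) : ℂ)) {x : ℝ} (hx : 0 < x) :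
    ∫ t : ℝ, barF A B c t * (x : ℂ) ^ (-((c : ℂ) + t * I)) =
      2 * Real.pi * ((∑' j, cf A B j * x ^ j : ℝ) : ℂ) := by
  have hA : 0 < A := by linarith
  obtain ⟨m, hm⟩ := exists_nat_gt (A - (B + 1))
  have hf : RapDec (barF A (B + 1) c) := rapDec_barF m hc0 hc (by linarith)
  have hd1 := hasDerivAt_barnes hf c hx
  have hd2 := ((hasDerivAt_series hA (by linarith : 0 < B + 1) hx).1.ofReal_comp).const_mul
    (2 * Real.pi : ℂ)
  have hd3 := hd2.congr_of_eventuallyEq (f₁ := fun y : ℝ => ∫ t : ℝ, barF A (B + 1) c t *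
      (y : ℂ) ^ (-((c : ℂ) + t * I)))
    (by filter_upwards [lt_mem_nhds hx] with y hy using h y hy)
  have he := hd1.unique hd3
  have hxc : (x : ℂ) ≠ 0 := by exact_mod_cast hx.ne'
  rw [series_step hA hB hx]
  push_cast at he ⊢
  have h0 := h x hx
  push_cast at h0
  rw [mul_add, mul_left_comm _ (B : ℂ), mul_left_comm _ (x : ℂ), ← he, ← h0,
    ← integral_const_mul, ← integral_const_mul, ← integral_add]
  · congr 1; ext t
    simp only [barF]
    rw [one_div_Gamma_eq_self_mul_one_div_Gamma_add_one (B - (c + t * I))]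
    push_cast
    rw [show (B : ℂ) + 1 - (c + t * I) = B - (c + t * I) + 1 by ring]
    field_simp
    ring
  · exact ((hf.mul_pow hx c).integrable).const_mul _
  · have := (((hf.mul_lin (-c) (-I)).mul_pow hx c).integrable.mul_const (x : ℂ)⁻¹).const_mul (x : ℂ)
    simpa only [mul_assoc] using this

lemma beta_integrableOn {p q : ℂ} (hp : 0 < p.re) (hq : 0 < q.re) :
    Integrable (fun u : ℝ => (u : ℂ) ^ (p - 1) * (1 - (u : ℂ)) ^ (q - 1))
      (volume.restrict (Ioo (0:ℝ) 1)) := by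
  have := betaIntegral_convergent hp hq
  rw [intervalIntegrable_iff_integrableOn_Ioo_of_le zero_le_one] at this
  exact this

lemma betaIntegral_eq_Ioo (p q : ℂ) : betaIntegral p q =
    ∫ u in Ioo (0:ℝ) 1, (u : ℂ) ^ (p - 1) * (1 - (u : ℂ)) ^ (q - 1) := by
  rw [betaIntegral, intervalIntegral.integral_of_le zero_le_one, integral_Ioc_eq_integral_Ioo]

lemma kummer_series {A B x : ℝ} (hA : 0 < A) (hB : A < B) (hx : 0 < x) :
    ∫ u in Ioo (0:ℝ) 1, ((u : ℂ) ^ ((A : ℂ) - 1) * (1 - (u : ℂ)) ^ (((B - A : ℝ) : ℂ) - 1)) *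
      (Real.exp (-(x * u)) : ℂ) =
    Gamma ((B - A : ℝ) : ℂ) * ((∑' j, cf A B j * x ^ j : ℝ) : ℂ) := by
  have hAc : 0 < (A : ℂ).re := by simpa using hA
  have hD : 0 < ((B - A : ℝ) : ℂ).re := by simp; linarith
  have hi := beta_integrableOn hAc hD
  set h : ℝ → ℂ := fun u => (u : ℂ) ^ ((A : ℂ) - 1) * (1 - (u : ℂ)) ^ (((B - A : ℝ) : ℂ) - 1) with hh
  set F : ℕ → ℝ → ℂ := fun j u => h u * ((((-(x * u)) ^ j / j.factorial : ℝ)) : ℂ) with hF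
  have hFn : ∀ j, ∀ u ∈ Ioo (0:ℝ) 1, ‖F j u‖ ≤ ‖h u‖ * (x ^ j / j.factorial) := by
    intro j u hu
    simp only [hF]
    rw [norm_mul, norm_real, Real.norm_eq_abs, abs_div, abs_pow, abs_neg, Nat.abs_cast,
      abs_of_pos (mul_pos hx hu.1)]
    have : x * u ≤ x := by nlinarith [hu.2]
    have := mul_pos hx hu.1
    gcongr
  have hFi : ∀ j, Integrable (F j) (volume.restrict (Ioo (0:ℝ) 1)) := by
    intro j
    refine (hi.norm.mul_const (x ^ j / j.factorial)).mono' ?_ ?_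
    · exact hi.aestronglyMeasurable.mul (by fun_prop)
    · exact (ae_restrict_iff' measurableSet_Ioo).2 (Eventually.of_forall fun u hu => hFn j u hu)
  have hsum : Summable fun j => ∫ u in Ioo (0:ℝ) 1, ‖F j u‖ := by
    refine Summable.of_nonneg_of_le (fun j => by positivity) (fun j => ?_)
      ((Real.summable_pow_div_factorial x).mul_left (∫ u in Ioo (0:ℝ) 1, ‖h u‖))
    rw [← integral_mul_const]
    exact setIntegral_mono_on (hFi j).norm (hi.norm.mul_const _) measurableSet_Ioo (hFn j)
  have hs := hasSum_integral_of_summable_integral_norm hFi hsum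
  have e1 : ∀ u, ∑' j, F j u = h u * (Real.exp (-(x * u)) : ℂ) := by
    intro u
    simp only [hF]
    rw [tsum_mul_left, ← ofReal_tsum, Real.exp_eq_exp_ℝ, NormedSpace.exp_eq_tsum_div]
  have e2 : ∀ j, ∫ u in Ioo (0:ℝ) 1, F j u =
      Gamma ((B - A : ℝ) : ℂ) * ((cf A B j * x ^ j : ℝ) : ℂ) := by
    intro j
    have hb := Gamma_mul_Gamma_eq_betaIntegral (s := (A : ℂ) + j) (t := ((B - A : ℝ) : ℂ))
      (by simp; positivity) hD
    rw [show (A : ℂ) + j + ((B - A : ℝ) : ℂ) = ((B + j : ℝ) : ℂ) by push_cast; ring,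
      betaIntegral_eq_Ioo] at hb
    have hne : Gamma ((B + j : ℝ) : ℂ) ≠ 0 := Gamma_ne_zero_of_re_pos (by
      rw [ofReal_re]; have : (0:ℝ) ≤ j := Nat.cast_nonneg j
      linarith)
    have e3 : ∫ u in Ioo (0:ℝ) 1, F j u = ((-x) ^ j / j.factorial : ℂ) *
        ∫ u in Ioo (0:ℝ) 1, (u : ℂ) ^ ((A : ℂ) + j - 1) * (1 - (u : ℂ)) ^ (((B - A : ℝ) : ℂ) - 1) := by
      rw [← integral_const_mul]
      refine setIntegral_congr_fun measurableSet_Ioo fun u hu => ?_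
      have hu0 : (u : ℂ) ≠ 0 := by exact_mod_cast hu.1.ne'
      simp only [hF, hh]
      rw [show (A : ℂ) + j - 1 = (A - 1) + (j : ℂ) by ring, cpow_add _ _ hu0, cpow_natCast]
      push_cast
      rw [show (-((x : ℂ) * u)) = (-x) * u by ring, mul_pow]
      ring
    rw [e3, cf]
    push_cast [← Gamma_ofReal]
    push_cast at hb hne
    rw [neg_pow]
    field_simp
    linear_combination (-(x : ℂ) ^ j * (j.factorial : ℂ)⁻¹) * hb
  simp only [e1, e2] at hs
  rw [hs.tsum_eq.symm, tsum_mul_left, ofReal_tsum]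

lemma barnes_base {A B c x : ℝ} (hc0 : 0 < c) (hc : c < A) (hB : A < B) (hx : 0 < x) :
    ∫ t : ℝ, barF A B c t * (x : ℂ) ^ (-((c : ℂ) + t * I)) =
      2 * Real.pi * ((∑' j, cf A B j * x ^ j : ℝ) : ℂ) := by
  have hA : 0 < A := by linarith
  have hD : 0 < ((B - A : ℝ) : ℂ).re := by simp; linarith
  have hne := Gamma_ne_zero_of_re_pos hD
  set g : ℝ → ℂ := fun t => Gamma (c + t * I) * (x : ℂ) ^ (-((c : ℂ) + t * I)) with hg
  set h : ℝ → ℂ := fun u => (u : ℂ) ^ (((A - c : ℝ) : ℂ) - 1) *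
    (1 - (u : ℂ)) ^ (((B - A : ℝ) : ℂ) - 1) with hh
  have hgi : Integrable g := ((rapDec_Gamma hc0).mul_pow hx c).integrable
  have hhi : Integrable h (volume.restrict (Ioo (0:ℝ) 1)) :=
    beta_integrableOn (by simp; linarith) hD
  set K : ℝ → ℝ → ℂ := fun t u => cexp (((-(t * Real.log u) : ℝ) : ℂ) * I) * (g t * h u) with hK
  have hKi : Integrable (Function.uncurry K) (volume.prod (volume.restrict (Ioo (0:ℝ) 1))) := by
    have h0 := hgi.mul_prod hhi
    refine h0.bdd_mul (c := 1) (f := fun z : ℝ × ℝ =>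
      cexp (((-(z.1 * Real.log z.2) : ℝ) : ℂ) * I)) ?_ ?_
    · refine Measurable.aestronglyMeasurable ?_
      have : Measurable fun z : ℝ × ℝ => Real.log z.2 := Real.measurable_log.comp measurable_snd
      fun_prop
    · exact Eventually.of_forall fun z => (norm_exp_ofReal_mul_I _).le
  have hexp : ∀ t : ℝ, ∀ u ∈ Ioo (0:ℝ) 1,
      cexp (((-(t * Real.log u) : ℝ) : ℂ) * I) = (u : ℂ) ^ (-(t * I)) := by
    intro t u hu
    rw [cpow_def_of_ne_zero (by exact_mod_cast hu.1.ne'), ← ofReal_log hu.1.le]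
    push_cast; ring_nf
  have hswap := integral_integral_swap hKi
  have e1 : ∀ t : ℝ, ∫ u in Ioo (0:ℝ) 1, K t u =
      Gamma ((B - A : ℝ) : ℂ) * (barF A B c t * (x : ℂ) ^ (-((c : ℂ) + t * I))) := by
    intro t
    rw [barF, ratio_eq hc hB, betaIntegral_eq_Ioo]
    have : ∫ u in Ioo (0:ℝ) 1, K t u = g t * ∫ u in Ioo (0:ℝ) 1,
        (u : ℂ) ^ ((A : ℂ) - (c + t * I) - 1) * (1 - (u : ℂ)) ^ (((B - A : ℝ) : ℂ) - 1) := by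
      rw [← integral_const_mul]
      refine setIntegral_congr_fun measurableSet_Ioo fun u hu => ?_
      have hu0 : (u : ℂ) ≠ 0 := by exact_mod_cast hu.1.ne'
      simp only [hK, hh, hexp t u hu]
      rw [show (A : ℂ) - (c + t * I) - 1 = -(t * I) + (((A - c : ℝ) : ℂ) - 1) by push_cast; ring,
        cpow_add _ _ hu0]
      ring
    rw [this, hg]
    field_simp
  have e2 : ∀ u ∈ Ioo (0:ℝ) 1, ∫ t : ℝ, K t u = 2 * Real.pi *
      (((u : ℂ) ^ ((A : ℂ) - 1) * (1 - (u : ℂ)) ^ (((B - A : ℝ) : ℂ) - 1)) *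
      (Real.exp (-(x * u)) : ℂ)) := by
    intro u hu
    have hu0 : (u : ℂ) ≠ 0 := by exact_mod_cast hu.1.ne'
    have hcm := cahen_mellin (mul_pos hx hu.1) hc0
    have : ∫ t : ℝ, K t u = ((u : ℂ) ^ ((A : ℂ) - 1) * (1 - (u : ℂ)) ^ (((B - A : ℝ) : ℂ) - 1)) *
      ∫ t : ℝ, Gamma (c + t * I) * ((x * u : ℝ) : ℂ) ^ (-((c : ℂ) + t * I)) := by
      rw [← integral_const_mul]
      congr 1; ext t
      simp only [hK, hh, hg, hexp t u hu]
      rw [ofReal_mul, mul_cpow_ofReal_nonneg hx.le hu.1.le,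
        show ((A - c : ℝ) : ℂ) - 1 = (A - 1) + (-c : ℂ) by push_cast; ring,
        show (u : ℂ) ^ (-((c : ℂ) + t * I)) = u ^ (-c : ℂ) * u ^ (-(t * I)) by
          rw [← cpow_add _ _ hu0]; ring_nf, cpow_add _ _ hu0]
      ring
    rw [this, hcm]
    ring
  simp only [e1] at hswap
  rw [setIntegral_congr_fun measurableSet_Ioo e2, integral_const_mul, integral_const_mul,
    kummer_series hA hB hx] at hswap
  apply mul_left_cancel₀ hne
  rw [hswap]; ring

lemma barnes_all (m : ℕ) {A B c : ℝ} (hB : 0 < B) (hc0 : 0 < c) (hc : c < A) (hm : A < B + m)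
    {x : ℝ} (hx : 0 < x) :
    ∫ t : ℝ, barF A B c t * (x : ℂ) ^ (-((c : ℂ) + t * I)) =
      2 * Real.pi * ((∑' j, cf A B j * x ^ j : ℝ) : ℂ) := by
  induction m generalizing B x with
  | zero => exact barnes_base hc0 hc (by simpa using hm) hx
  | succ m ih =>
    exact barnes_step hB hc0 hc (fun y hy => ih (by linarith) (by push_cast at hm; linarith) hy) hx

lemma Gamma_add_nat_real {A : ℝ} (hA : 0 < A) (j : ℕ) :
    Real.Gamma (A + j) = (ascPochhammer ℝ j).eval A * Real.Gamma A := by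
  induction j with
  | zero => simp
  | succ j ih =>
    rw [show A + ((j + 1 : ℕ) : ℝ) = A + j + 1 by push_cast; ring,
      Real.Gamma_add_one (by positivity), ih, ascPochhammer_succ_eval]
    ring

lemma series_eq_oneF1 {A B x : ℝ} (hA : 0 < A) (hB : 0 < B) :
    ((∑' j, cf A B j * x ^ j : ℝ) : ℂ) = Gamma (A : ℂ) / Gamma (B : ℂ) * oneF1 A B (-x) := by
  rw [oneF1, ← tsum_mul_left, ofReal_tsum]
  congr 1; ext j
  have e : ∀ z : ℝ, (ascPochhammer ℂ j).eval (z : ℂ) = ((ascPochhammer ℝ j).eval z : ℝ) := by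
    intro z
    rw [← ascPochhammer_map ofRealHom, Polynomial.eval_map]
    exact Polynomial.eval₂_at_apply ofRealHom z
  rw [cf, Gamma_add_nat_real hA, Gamma_add_nat_real hB, e, e, Gamma_ofReal, Gamma_ofReal, neg_pow]
  push_cast
  rw [mul_div_mul_comm]
  ring

theorem barnes_integral_eq_oneF1 (k : ℝ) (hk : 1 ≤ k) (a : ℕ) (ha : a = 0 ∨ a = 1)
    (X : ℝ) (hX : 0 < X) (d₁ : ℝ) (hd₁ : 0 < d₁) (hd₁' : d₁ < (k + a) / 2) :
    MeasureTheory.Integrable (fun t : ℝ =>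
      Complex.Gamma ((d₁ : ℂ) + t * I) *
        Complex.Gamma (((k : ℂ) + a) / 2 - ((d₁ : ℂ) + t * I)) /
        Complex.Gamma ((1 + (a : ℂ) - k) / 2 + ((d₁ : ℂ) + t * I)) *
        (X : ℂ) ^ (-((d₁ : ℂ) + t * I))) ∧
    (1 / (2 * Real.pi)) * ∫ t : ℝ,
        Complex.Gamma ((d₁ : ℂ) + t * I) *
          Complex.Gamma (((k : ℂ) + a) / 2 - ((d₁ : ℂ) + t * I)) /
          Complex.Gamma ((1 + (a : ℂ) - k) / 2 + ((d₁ : ℂ) + t * I)) *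
          (X : ℂ) ^ (-((d₁ : ℂ) + t * I)) =
      Complex.Gamma (((k : ℂ) + a) / 2) / Complex.Gamma ((a : ℂ) + 1 / 2) *
        (X : ℂ) ^ (-(((k : ℂ) + a) / 2)) *
        oneF1 (((k : ℂ) + a) / 2) ((a : ℂ) + 1 / 2) (-1 / X) := by
  obtain ⟨A, hA⟩ : ∃ A : ℝ, A = (k + a) / 2 := ⟨_, rfl⟩
  obtain ⟨B, hB⟩ : ∃ B : ℝ, B = a + 1 / 2 := ⟨_, rfl⟩
  have hAc : ((k : ℂ) + a) / 2 = (A : ℂ) := by rw [hA]; push_cast; ring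
  have hBc : (a : ℂ) + 1 / 2 = (B : ℂ) := by rw [hB]; push_cast; ring
  have hBA : (1 + (a : ℂ) - k) / 2 = (B : ℂ) - A := by rw [hA, hB]; push_cast; ring
  rw [← hA] at hd₁'
  have hB0 : 0 < B := by rw [hB]; positivity
  have hA0 : 0 < A := by linarith
  have hx : 0 < X⁻¹ := inv_pos.2 hX
  have hXc : (X : ℂ) ≠ 0 := by exact_mod_cast hX.ne'
  obtain ⟨m, hm⟩ := exists_nat_gt (A - B)
  have hc0 : 0 < A - d₁ := by linarith
  have hc : A - d₁ < A := by linarith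
  have hR := ((rapDec_barF m hc0 hc (B := B) (by linarith)).mul_pow hx (A - d₁)).integrable
  have hI := barnes_all m hB0 hc0 hc (by linarith) hx
  rw [hAc, hBc, hBA]
  have key : (fun t : ℝ => Gamma ((d₁ : ℂ) + t * I) * Gamma ((A : ℂ) - ((d₁ : ℂ) + t * I)) /
        Gamma ((B : ℂ) - A + ((d₁ : ℂ) + t * I)) * (X : ℂ) ^ (-((d₁ : ℂ) + t * I))) =
      fun t : ℝ => (X : ℂ) ^ (-(A : ℂ)) * (fun t : ℝ => barF A B (A - d₁) t *
        ((X⁻¹ : ℝ) : ℂ) ^ (-(((A - d₁ : ℝ) : ℂ) + t * I))) (-t) := by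
    ext t
    have h1 : ((A - d₁ : ℝ) : ℂ) + ((-t : ℝ) : ℂ) * I = A - (d₁ + t * I) := by push_cast; ring
    simp only [barF]
    rw [h1, show (A : ℂ) - (A - (d₁ + t * I)) = d₁ + t * I by ring,
      show (B : ℂ) - (A - (d₁ + t * I)) = B - A + (d₁ + t * I) by ring,
      show (-(d₁ + t * I) : ℂ) = -A + (A - (d₁ + t * I)) by ring, cpow_add _ _ hXc,
      ofReal_inv, inv_cpow _ _ (by rw [arg_ofReal_of_nonneg hX.le]; exact Real.pi_pos.ne),
      cpow_neg _ (A - (d₁ + t * I)), inv_inv]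
    ring
  rw [key]
  refine ⟨hR.comp_neg.const_mul _, ?_⟩
  rw [integral_const_mul, integral_neg_eq_self (fun t : ℝ => barF A B (A - d₁) t *
        ((X⁻¹ : ℝ) : ℂ) ^ (-(((A - d₁ : ℝ) : ℂ) + t * I))), hI, series_eq_oneF1 hA0 hB0]
  have : (Real.pi : ℂ) ≠ 0 := by exact_mod_cast Real.pi_ne_zero
  rw [show (-1 / X : ℂ) = -((X⁻¹ : ℝ) : ℂ) by push_cast; ring]
  field_simp
end

section
/- Let k ≥ 1 be a real number, let a ∈ {0,1}, let X > 0, and let d be a real number with (k+1)/2 < d < k/2 + 1. Then the function t ↦ Γ(d+it)·Γ((k+a)/2 − d − it)/Γ((1+a−k)/2 + d + it) · X^{−(d+it)} is integrable on ℝ and (1/(2π)) ∫_{−∞}^{∞} Γ(d+it)·Γ((k+a)/2 − d − it)/Γ((1+a−k)/2 + d + it) · X^{−(d+it)} dt = (Γ((k+a)/2)/Γ(a + 1/2)) · X^{−(k+a)/2} · ( ₁F₁((k+a)/2; a + 1/2; −1/X) − 1 ). -/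
open Complex

namespace BarnesAux

open Complex Set Filter Topology MeasureTheory

lemma conv_aux {F : ℝ → ℂ} (hc : ContinuousOn F (Ioi 0)) {C p q : ℝ}
    (hp : ∀ z > 0, ‖F z‖ ≤ C * z ^ p) (hq : ∀ z > 0, ‖F z‖ ≤ C * z ^ q) {s : ℂ}
    (h1 : -p < s.re) (h2 : s.re < -q) : MellinConvergent F s := by
  refine mellinConvergent_of_isBigO_rpow (a := -q) (b := -p)
    (hc.locallyIntegrableOn measurableSet_Ioi) ?_ h2 ?_ h1
  · refine Asymptotics.IsBigO.of_bound C ?_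
    filter_upwards [eventually_gt_atTop 0] with z hz
    rw [neg_neg, Real.norm_of_nonneg (Real.rpow_nonneg hz.le _)]
    exact hq z hz
  · refine Asymptotics.IsBigO.of_bound C ?_
    filter_upwards [self_mem_nhdsWithin] with z hz
    rw [neg_neg, Real.norm_of_nonneg (Real.rpow_nonneg (le_of_lt hz) _)]
    exact hp z hz

lemma ibp_aux {F f : ℝ → ℂ} (hF : ∀ z > 0, HasDerivAt F (f z) z) {C p q : ℝ}
    (hp : ∀ z > 0, ‖F z‖ ≤ C * z ^ p) (hq : ∀ z > 0, ‖F z‖ ≤ C * z ^ q) {s : ℂ} (hs : s ≠ 0)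
    (h1 : -p < s.re) (h2 : s.re < -q) (hf : MellinConvergent f (s + 1)) :
    mellin F s = - (1 / s) * mellin f (s + 1) := by
  have hconv : MellinConvergent F s :=
    conv_aux (fun z hz => (hF z hz).continuousAt.continuousWithinAt) hp hq h1 h2
  have hbd : ∀ (r : ℝ), (∀ z > 0, ‖F z‖ ≤ C * z ^ r) → ∀ z > 0,
      ‖F z * ((z : ℂ) ^ s / s)‖ ≤ C / ‖s‖ * z ^ (r + s.re) := by
    intro r hr z hz
    rw [norm_mul, norm_div, norm_cpow_eq_rpow_re_of_pos hz, Real.rpow_add hz]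
    have := mul_le_mul_of_nonneg_right (hr z hz)
      (show 0 ≤ z ^ s.re / ‖s‖ by positivity)
    calc _ ≤ _ := this
      _ = _ := by ring
  have key := integral_Ioi_mul_deriv_eq_deriv_mul (a := (0:ℝ)) (a' := 0) (b' := 0) (u := F)
    (v := fun z : ℝ => (z : ℂ) ^ s / s) (u' := f) (v' := fun z : ℝ => (z : ℂ) ^ (s - 1))
    (fun z hz => hF z hz) ?_ ?_ ?_ ?_ ?_
  · rw [mellin, mellin, ← integral_const_mul]
    simp only [smul_eq_mul, add_sub_cancel_right]
    have e1 : ∫ t in Ioi (0:ℝ), (t : ℂ) ^ (s - 1) * F t = ∫ t in Ioi (0:ℝ), F t * (t : ℂ) ^ (s - 1) := by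
      simp only [mul_comm]
    rw [e1, key, sub_zero, zero_sub, ← integral_neg]
    congr 1; ext z; ring
  · intro z hz
    have := (hasDerivAt_ofReal_cpow_const' (ne_of_gt hz : z ≠ 0) (r := s - 1) (by
      intro h; apply hs; linear_combination h))
    simpa using this
  · refine hconv.congr_fun (fun z _ => ?_) measurableSet_Ioi
    simp [mul_comm]
  · refine (Integrable.div_const hf s).congr ?_
    refine Eventually.of_forall (fun z => ?_)
    simp; ring
  · refine squeeze_zero_norm' (a := fun z => C / ‖s‖ * z ^ (p + s.re)) ?_ ?_
    · filter_upwards [self_mem_nhdsWithin] with z hz using hbd p hp z hz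
    · have : Tendsto (fun z : ℝ => z ^ (p + s.re)) (𝓝[>] 0) (𝓝 0) := by
        have h := (Real.continuousAt_rpow_const 0 (p + s.re) (Or.inr (by linarith))).tendsto
        rw [Real.zero_rpow (by linarith)] at h
        exact h.mono_left nhdsWithin_le_nhds
      simpa using this.const_mul (C / ‖s‖)
  · refine squeeze_zero_norm' (a := fun z => C / ‖s‖ * z ^ (q + s.re)) ?_ ?_
    · filter_upwards [eventually_gt_atTop 0] with z hz using hbd q hq z hz
    · have : Tendsto (fun z : ℝ => z ^ (q + s.re)) atTop (𝓝 0) := by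
        have h := tendsto_rpow_neg_atTop (y := -(q + s.re)) (by linarith)
        simpa using h
      simpa using this.const_mul (C / ‖s‖)

lemma cgamma_int {a c : ℝ} (ha : 0 < a) (hc : 0 < c) :
    IntegrableOn (fun t : ℝ => t ^ (a - 1) * Real.exp (-(c * t))) (Ioi 0) := by
  refine Integrable.of_integral_ne_zero ?_
  rw [Real.integral_rpow_mul_exp_neg_mul_Ioi ha hc]
  have := Real.Gamma_pos_of_pos ha
  positivity

lemma cgamma_meas (a r : ℂ) :
    AEStronglyMeasurable (fun t : ℝ => (t : ℂ) ^ (a - 1) * cexp (-(r * t)))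
      (volume.restrict (Ioi 0)) := by
  refine ContinuousOn.aestronglyMeasurable ?_ measurableSet_Ioi
  refine ContinuousOn.mul ?_ (by fun_prop)
  exact fun t ht => (continuousAt_ofReal_cpow_const _ _
    (Or.inr (ne_of_gt ht))).continuousWithinAt

lemma cgamma_conv {a r : ℂ} (ha : 0 < a.re) (hr : 0 < r.re) :
    IntegrableOn (fun t : ℝ => (t : ℂ) ^ (a - 1) * cexp (-(r * t))) (Ioi 0) := by
  refine Integrable.mono' (cgamma_int ha hr) (cgamma_meas a r) ?_
  refine (ae_restrict_iff' measurableSet_Ioi).2 (Eventually.of_forall fun z hz => ?_)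
  rw [norm_mul, norm_cpow_eq_rpow_re_of_pos hz, norm_exp]
  simp

lemma cgamma {a r : ℂ} (ha : 0 < a.re) (hr : 0 < r.re) :
    ∫ t : ℝ in Ioi 0, (t : ℂ) ^ (a - 1) * cexp (-(r * t)) = (1 / r) ^ a * Gamma a := by
  have hopen : IsOpen {z : ℂ | 0 < z.re} := isOpen_lt continuous_const continuous_re
  have h1 : AnalyticOnNhd ℂ (fun r : ℂ => ∫ t : ℝ in Ioi 0, (t : ℂ) ^ (a - 1) * cexp (-(r * t)))
      {z : ℂ | 0 < z.re} := by
    refine DifferentiableOn.analyticOnNhd (fun r₀ hr₀ => ?_) hopen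
    have hr₀ : 0 < r₀.re := hr₀
    refine DifferentiableAt.differentiableWithinAt ?_
    refine (hasDerivAt_integral_of_dominated_loc_of_deriv_le (s := Metric.ball r₀ (r₀.re / 2))
      (bound := fun t : ℝ => t ^ ((a.re + 1) - 1) * Real.exp (-(r₀.re / 2 * t)))
      (F' := fun r (t : ℝ) => -((t : ℂ) ^ ((a + 1) - 1) * cexp (-(r * t))))
      (Metric.ball_mem_nhds _ (by positivity)) (Eventually.of_forall fun r => cgamma_meas a r)
      (cgamma_conv ha hr₀) (cgamma_meas (a + 1) r₀).neg ?_
      (cgamma_int (by linarith) (by positivity)) ?_).2.differentiableAt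
    · refine (ae_restrict_iff' measurableSet_Ioi).2 (Eventually.of_forall fun z hz => ?_)
      intro r hr
      have hz : 0 < z := hz
      rw [norm_neg, norm_mul, norm_cpow_eq_rpow_re_of_pos hz, norm_exp]
      simp only [sub_re, add_re, one_re, neg_re, mul_re, ofReal_re, ofReal_im, mul_zero, sub_zero]
      gcongr
      have := (abs_re_le_norm (r - r₀)).trans_lt (by simpa [dist_eq_norm] using hr)
      rw [sub_re, abs_lt] at this
      linarith
    · refine (ae_restrict_iff' measurableSet_Ioi).2 (Eventually.of_forall fun z hz => ?_)
      intro r hr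
      have hz : 0 < z := hz
      have h : HasDerivAt (fun w : ℂ => (z : ℂ) ^ (a - 1) * cexp (-(w * z)))
          ((z : ℂ) ^ (a - 1) * (cexp (-(r * z)) * (-(1 * z)))) r :=
        (((hasDerivAt_id r).mul_const (z : ℂ)).neg.cexp).const_mul _
      refine h.congr_deriv ?_
      have : (z : ℂ) ^ (a + 1 - 1) = (z : ℂ) ^ (a - 1) * z := by
        rw [show a + 1 - 1 = (a - 1) + 1 by ring, cpow_add _ _ (by exact_mod_cast hz.ne'), cpow_one]
      rw [this]; ring
  have h2 : AnalyticOnNhd ℂ (fun r : ℂ => (1 / r) ^ a * Gamma a) {z : ℂ | 0 < z.re} := by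
    refine DifferentiableOn.analyticOnNhd (fun r₀ hr₀ => ?_) hopen
    have hr₀ : 0 < r₀.re := hr₀
    have hne : r₀ ≠ 0 := by rintro rfl; simp at hr₀
    refine DifferentiableAt.differentiableWithinAt ?_
    refine DifferentiableAt.mul_const (DifferentiableAt.cpow_const ?_ ?_) _
    · exact (differentiableAt_const _).div differentiableAt_id hne
    · left
      simp only [one_div, inv_re]
      have := normSq_pos.2 hne
      positivity
  refine AnalyticOnNhd.eqOn_of_preconnected_of_frequently_eq (z₀ := 1) h1 h2
    (convex_halfSpace_re_gt 0).isPreconnected (by simp) ?_ hr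
  have ht : Tendsto (fun n : ℕ => (((1 : ℝ) + 1 / ((n : ℝ) + 1) : ℝ) : ℂ)) atTop (𝓝[≠] 1) := by
    refine tendsto_nhdsWithin_iff.2 ⟨?_, Eventually.of_forall fun n => ?_⟩
    · have := tendsto_one_div_add_atTop_nhds_zero_nat (𝕜 := ℝ)
      have := (this.const_add 1)
      rw [add_zero] at this
      exact_mod_cast (continuous_ofReal.tendsto 1).comp this
    · simp only [mem_compl_iff, mem_singleton_iff]
      rw [ofReal_eq_one]
      have : (0:ℝ) < 1 / ((n : ℝ) + 1) := by positivity
      linarith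
  refine ht.frequently (Frequently.of_forall fun n => ?_)
  exact integral_cpow_mul_exp_neg_mul_Ioi ha (by positivity)

lemma exp_bd1 {x : ℂ} (hx : x.re ≤ 0) : ‖cexp x - 1‖ ≤ 2 := by
  calc _ ≤ ‖cexp x‖ + ‖(1:ℂ)‖ := norm_sub_le _ _
    _ ≤ 1 + 1 := by
        gcongr
        · rw [norm_exp]; exact Real.exp_le_one_iff.2 hx
        · simp
    _ = 2 := by norm_num

lemma exp_bd2 {x : ℂ} (hx : x.re ≤ 0) : ‖cexp x - 1‖ ≤ 2 * ‖x‖ := by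
  rcases le_total ‖x‖ 1 with h | h
  · exact norm_exp_sub_one_le h
  · linarith [exp_bd1 hx]

lemma exp_conv {r s : ℂ} (hr : 0 ≤ r.re) (h1 : -1 < s.re) (h2 : s.re < 0) :
    MellinConvergent (fun z : ℝ => cexp (-(r * z)) - 1) s := by
  have hre : ∀ z : ℝ, 0 < z → (-(r * z)).re ≤ 0 := by
    intro z hz; simp; positivity
  refine conv_aux (C := 2 * (1 + ‖r‖)) (p := 1) (q := 0) (by fun_prop) ?_ ?_ (by linarith) (by linarith)
  · intro z hz
    refine (exp_bd2 (hre z hz)).trans ?_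
    simp [abs_of_pos hz]
    nlinarith [norm_nonneg r]
  · intro z hz
    refine (exp_bd1 (hre z hz)).trans ?_
    simp

lemma exp_mellin_pos {r s : ℂ} (hr : 0 < r.re) (h1 : -1 < s.re) (h2 : s.re < 0) :
    mellin (fun z : ℝ => cexp (-(r * z)) - 1) s = (1 / r) ^ s * Gamma s := by
  have hre : ∀ z : ℝ, 0 < z → (-(r * z)).re ≤ 0 := by
    intro z hz; simp; positivity
  have hs : s ≠ 0 := by rintro rfl; simp at h2
  have hr0 : r ≠ 0 := by rintro rfl; simp at hr
  have hs1 : 0 < (s + 1).re := by simp; linarith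
  have hI := cgamma hs1 hr
  have hG : Gamma (s + 1) ≠ 0 := Gamma_ne_zero_of_re_pos hs1
  have hI0 : (1 / r) ^ (s + 1) * Gamma (s + 1) ≠ 0 := by
    refine mul_ne_zero ?_ hG
    rw [Ne, cpow_eq_zero_iff]; simp [hr0]
  have hM : MellinConvergent (fun z : ℝ => cexp (-(r * z))) (s + 1) := by
    by_contra hcon
    apply hI0
    rw [← hI]
    exact integral_undef hcon
  have := ibp_aux (F := fun z : ℝ => cexp (-(r * z)) - 1) (f := fun z : ℝ => (-r) • cexp (-(r * z)))
    (C := 2 * (1 + ‖r‖)) (p := 1) (q := 0) (s := s) ?_ ?_ ?_ hs (by linarith) (by linarith)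
    (hM.const_smul _)
  · rw [this, mellin_const_smul]
    have e : mellin (fun z : ℝ => cexp (-(r * z))) (s + 1) = (1 / r) ^ (s + 1) * Gamma (s + 1) := by
      rw [← hI]; rfl
    rw [e, Gamma_add_one s hs, cpow_add _ _ (by simp [hr0])]
    simp; field_simp
  · intro z hz
    have h : HasDerivAt (fun w : ℂ => cexp (-(r * w)) - 1) ((-r) • cexp (-(r * z))) (z : ℂ) := by
      have := ((((hasDerivAt_id (z:ℂ)).const_mul r).neg).cexp).sub_const 1
      simpa [mul_comm] using this
    exact h.comp_ofReal
  · intro z hz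
    refine (exp_bd2 (hre z hz)).trans ?_
    simp [abs_of_pos hz]
    nlinarith [norm_nonneg r]
  · intro z hz
    refine (exp_bd1 (hre z hz)).trans ?_
    simp

lemma exp_mellin_I {r s : ℂ} (hr : r.re = 0) (hr1 : ‖r‖ = 1) (h1 : -1 < s.re) (h2 : s.re < 0) :
    mellin (fun z : ℝ => cexp (-(r * z)) - 1) s = (1 / r) ^ s * Gamma s := by
  have hr0 : r ≠ 0 := by rintro rfl; simp at hr1
  have him : r.im ≠ 0 := by
    intro h; exact hr0 (Complex.ext hr h)
  have hL : Tendsto (fun ε : ℝ => mellin (fun z : ℝ => cexp (-((r + ε) * z)) - 1) s) (𝓝[>] 0)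
      (𝓝 (mellin (fun z : ℝ => cexp (-(r * z)) - 1) s)) := by
    have hdom : MellinConvergent (fun z : ℝ => ((min 2 (4 * z) : ℝ) : ℂ)) s := by
      refine conv_aux (C := 4) (p := 1) (q := 0) (by fun_prop) ?_ ?_ (by linarith) (by linarith)
      · intro z hz
        rw [norm_real, Real.norm_of_nonneg (by positivity)]
        simp
      · intro z hz
        rw [norm_real, Real.norm_of_nonneg (by positivity)]
        refine (min_le_left _ _).trans ?_
        norm_num
    refine tendsto_integral_filter_of_dominated_convergence _ ?_ ?_ hdom.norm ?_
    · filter_upwards [self_mem_nhdsWithin] with ε hε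
      exact (exp_conv (by simp [hr]; exact le_of_lt hε) h1 h2).aestronglyMeasurable
    · filter_upwards [self_mem_nhdsWithin, nhdsWithin_le_nhds (Iio_mem_nhds one_pos)] with ε hε hε1
      refine (ae_restrict_iff' measurableSet_Ioi).2 (Eventually.of_forall fun z hz => ?_)
      simp only [norm_smul]
      gcongr
      have hz : 0 < z := hz
      have hε : 0 < ε := hε
      have hε1 : ε < 1 := hε1
      rw [norm_real, Real.norm_of_nonneg (by positivity)]
      have hre : (-((r + ε) * z)).re ≤ 0 := by
        simp [hr]; positivity
      refine le_min (exp_bd1 hre) ((exp_bd2 hre).trans ?_)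
      rw [norm_neg, norm_mul, norm_real, Real.norm_of_nonneg hz.le]
      have : ‖r + ε‖ ≤ 2 := (norm_add_le _ _).trans (by
        rw [hr1, norm_real, Real.norm_of_nonneg hε.le]; linarith)
      nlinarith
    · refine Eventually.of_forall fun z => ?_
      have : Continuous (fun ε : ℝ => (z : ℂ) ^ (s - 1) • (cexp (-((r + ε) * z)) - 1)) := by fun_prop
      have h := this.tendsto 0
      simp only [ofReal_zero, add_zero] at h
      exact h.mono_left nhdsWithin_le_nhds
  have hR : Tendsto (fun ε : ℝ => (1 / (r + ε)) ^ s * Gamma s) (𝓝[>] 0)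
      (𝓝 ((1 / r) ^ s * Gamma s)) := by
    have : ContinuousAt (fun ε : ℝ => (1 / (r + ε)) ^ s * Gamma s) 0 := by
      refine ContinuousAt.mul (ContinuousAt.cpow ?_ continuousAt_const ?_) continuousAt_const
      · refine ContinuousAt.div continuousAt_const (by fun_prop) (by simpa)
      · right
        simp [inv_im, hr0, him]
    have h := this.tendsto
    simp only [ofReal_zero, add_zero] at h
    exact h.mono_left nhdsWithin_le_nhds
  refine tendsto_nhds_unique hL (hR.congr' ?_)
  filter_upwards [self_mem_nhdsWithin] with ε hε
  have hε : 0 < ε := hε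
  rw [exp_mellin_pos (by simp [hr, hε]) h1 h2]

lemma cpow_I_aux1 (s : ℂ) : (1 / I) ^ s = cexp (-(Real.pi * s / 2 * I)) := by
  rw [cpow_def_of_ne_zero (by simp), one_div, inv_I, log_neg_I]
  congr 1; ring

lemma cpow_I_aux2 (s : ℂ) : (1 / (-I)) ^ s = cexp (Real.pi * s / 2 * I) := by
  rw [cpow_def_of_ne_zero (by simp), one_div, inv_neg, inv_I, neg_neg, log_I]
  congr 1; ring

lemma cos_mellin {s : ℂ} (h1 : -1 < s.re) (h2 : s.re < 0) :
    HasMellin (fun z : ℝ => Complex.cos z - 1) s (Gamma s * Complex.cos (Real.pi * s / 2)) := by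
  have c1 := exp_conv (r := I) (by simp) h1 h2
  have c2 := exp_conv (r := -I) (by simp) h1 h2
  have h := hasMellin_add c1 c2
  have h' := hasMellin_const_smul h.1 (1 / 2 : ℂ)
  rw [h.2, exp_mellin_I (by simp) (by simp) h1 h2, exp_mellin_I (by simp) (by simp) h1 h2,
    cpow_I_aux1, cpow_I_aux2] at h'
  convert h' using 1
  · ext z
    rw [Complex.cos]
    simp only [smul_eq_mul]
    ring_nf
  · rw [Complex.cos]
    simp only [smul_eq_mul]
    ring_nf

lemma sin_mellin {s : ℂ} (h1 : -1 < s.re) (h2 : s.re < 0) :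
    HasMellin (fun z : ℝ => Complex.sin z) s (Gamma s * Complex.sin (Real.pi * s / 2)) := by
  have c1 := exp_conv (r := I) (by simp) h1 h2
  have c2 := exp_conv (r := -I) (by simp) h1 h2
  have h := hasMellin_sub c1 c2
  have h' := hasMellin_const_smul h.1 (I / 2 : ℂ)
  rw [h.2, exp_mellin_I (by simp) (by simp) h1 h2, exp_mellin_I (by simp) (by simp) h1 h2,
    cpow_I_aux1, cpow_I_aux2] at h'
  convert h' using 1
  · ext z
    rw [Complex.sin]
    simp only [smul_eq_mul]
    ring_nf
  · rw [Complex.sin]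
    simp only [smul_eq_mul]
    ring_nf

lemma cos_mellin' {s : ℂ} (h1 : -2 < s.re) (h2 : s.re < -1) :
    HasMellin (fun z : ℝ => Complex.cos z - 1) s (Gamma s * Complex.cos (Real.pi * s / 2)) := by
  have hs : s ≠ 0 := by rintro rfl; norm_num at h2
  have hS := sin_mellin (s := s + 1) (by simp; linarith) (by simp; linarith)
  have hd : ∀ z : ℝ, z > 0 → HasDerivAt (fun z : ℝ => Complex.cos z - 1) ((-1 : ℂ) • Complex.sin z) z := by
    intro z _
    have := ((Complex.hasDerivAt_cos (z : ℂ)).sub_const 1).comp_ofReal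
    simpa using this
  have hp : ∀ z : ℝ, z > 0 → ‖Complex.cos z - 1‖ ≤ 2 * z ^ (2 : ℝ) := by
    intro z hz
    rw [← ofReal_cos, ← ofReal_one, ← ofReal_sub, norm_real, Real.norm_eq_abs, abs_le]
    norm_cast
    constructor <;> nlinarith [Real.one_sub_sq_div_two_le_cos (x := z), Real.cos_le_one z]
  have hq : ∀ z : ℝ, z > 0 → ‖Complex.cos z - 1‖ ≤ 2 * z ^ (0 : ℝ) := by
    intro z hz
    rw [← ofReal_cos, ← ofReal_one, ← ofReal_sub, norm_real, Real.norm_eq_abs, abs_le]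
    simp only [Real.rpow_zero]
    constructor <;> linarith [Real.neg_one_le_cos z, Real.cos_le_one z]
  refine ⟨conv_aux (fun z hz => (hd z hz).continuousAt.continuousWithinAt) hp hq (by linarith)
    (by linarith), ?_⟩
  rw [ibp_aux hd hp hq hs (by linarith) (by linarith) (hS.1.const_smul _), mellin_const_smul,
    hS.2, Gamma_add_one s hs, show (Real.pi : ℂ) * (s + 1) / 2 = Real.pi * s / 2 + Real.pi / 2 by ring,
    Complex.sin_add_pi_div_two]
  simp only [smul_eq_mul]
  field_simp

lemma sinc_mellin {s : ℂ} (h1 : -1 < s.re) (h2 : s.re < 0) :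
    HasMellin (fun z : ℝ => Complex.sin z / z - 1) s
      (Gamma s * Complex.cos (Real.pi * s / 2) / (1 - s)) := by
  have hs : s - 1 ≠ 0 := by
    intro h
    have : s = 1 := by linear_combination h
    rw [this] at h2; norm_num at h2
  have hS := cos_mellin h1 h2
  have hd : ∀ z : ℝ, z > 0 → HasDerivAt (fun z : ℝ => Complex.sin z - z) (Complex.cos z - 1) z := by
    intro z _
    exact ((Complex.hasDerivAt_sin (z : ℂ)).sub (hasDerivAt_id (z:ℂ))).comp_ofReal
  have hq0 : ∀ z : ℝ, z > 0 → |Real.sin z - z| ≤ 2 * z := by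
    intro z hz
    rw [abs_le]
    have h3 : -z ≤ Real.sin z := by
      have := Real.abs_sin_le_abs (x := z)
      rw [abs_of_pos hz, abs_le] at this
      exact this.1
    constructor <;> linarith [Real.sin_le hz.le, Real.neg_one_le_sin z, Real.sin_lt hz]
  have hq : ∀ z : ℝ, z > 0 → ‖Complex.sin z - z‖ ≤ 2 * z ^ (1 : ℝ) := by
    intro z hz
    rw [← ofReal_sin, ← ofReal_sub, norm_real, Real.norm_eq_abs, Real.rpow_one]
    exact hq0 z hz
  have hp : ∀ z : ℝ, z > 0 → ‖Complex.sin z - z‖ ≤ 2 * z ^ (2 : ℝ) := by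
    intro z hz
    rw [← ofReal_sin, ← ofReal_sub, norm_real, Real.norm_eq_abs]
    norm_cast
    rcases le_total z 1 with h | h
    · have hb := Real.sin_bound (x := z) (by rwa [abs_of_pos hz])
      rw [abs_of_pos hz, abs_le] at hb
      rw [abs_le]
      have e3 : z ^ 3 ≤ z ^ 2 := pow_le_pow_of_le_one hz.le h (by norm_num)
      have e5 : z ^ 5 ≤ z ^ 2 := pow_le_pow_of_le_one hz.le h (by norm_num)
      have e3' : 0 ≤ z ^ 3 := by positivity
      have e2' : 0 ≤ z ^ 2 := by positivity
      constructor <;> linarith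
    · refine (hq0 z hz).trans ?_
      nlinarith
  have hre : (s - 1).re = s.re - 1 := by simp
  have hc : MellinConvergent (fun z : ℝ => Complex.sin z - z) (s - 1) :=
    conv_aux (fun z hz => (hd z hz).continuousAt.continuousWithinAt) hp hq (by linarith)
    (by linarith)
  have hm := ibp_aux hd hp hq hs (by linarith) (by linarith) (by simpa using hS.1)
  rw [sub_add_cancel, hS.2] at hm
  have heq : ∀ z ∈ Ioi (0:ℝ), (z : ℂ) ^ (s - 1 - 1) • (Complex.sin z - z) =
      (z : ℂ) ^ (s - 1) • (Complex.sin z / z - 1) := by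
    intro z hz
    have hz0 : (z : ℂ) ≠ 0 := by exact_mod_cast (ne_of_gt hz)
    rw [cpow_sub _ 1 hz0, cpow_one]
    simp only [smul_eq_mul]
    field_simp
  have hs' : 1 - s ≠ 0 := by intro h; apply hs; linear_combination -h
  refine ⟨hc.congr_fun heq measurableSet_Ioi, ?_⟩
  rw [mellin, ← setIntegral_congr_fun measurableSet_Ioi heq]
  refine hm.trans ?_
  rw [show s - 1 = -(1 - s) by ring]
  field_simp

/-- the kernel -/
noncomputable def hker (a : ℕ) (v : ℝ) : ℂ :=
  if a = 0 then Complex.cos ((2 * v ^ (1/2 : ℝ) : ℝ) : ℂ)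
  else Complex.sin ((2 * v ^ (1/2 : ℝ) : ℝ) : ℂ) / ((2 * v ^ (1/2 : ℝ) : ℝ) : ℂ)

lemma comp_mellin {f : ℝ → ℂ} {w m : ℂ} (h : HasMellin f (-2 * w) m) :
    HasMellin (fun v => f (2 * v ^ (1/2 : ℝ))) (-w) (2 * 2 ^ (2 * w) * m) := by
  have e : (-w) / ((1/2 : ℝ) : ℂ) = -2 * w := by push_cast; ring
  constructor
  · refine (MellinConvergent.comp_rpow (f := fun y => f (2 * y)) (by norm_num)).2 ?_
    refine (MellinConvergent.comp_mul_left (by norm_num)).2 ?_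
    rw [e]; exact h.1
  · rw [mellin_comp_rpow (fun y => f (2 * y)), mellin_comp_mul_left _ _ (by norm_num), e, h.2,
      abs_of_pos (by norm_num)]
    simp only [smul_eq_mul, real_smul]
    push_cast
    rw [show -(-2 * w) = 2 * w by ring]
    ring

lemma gamma_id {w : ℂ} (h0 : Gamma (1/2 + w) ≠ 0) (h0' : Gamma (1/2 - w) ≠ 0) :
    2 * 2 ^ (2 * w) * (Gamma (-2 * w) * Complex.cos (Real.pi * (-2 * w) / 2)) =
      Gamma (1/2) * Gamma (-w) / Gamma (1/2 + w) := by
  have hd := Gamma_mul_Gamma_add_half (-w)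
  have hr := Gamma_mul_Gamma_one_sub (1/2 + w)
  have hc : Complex.cos (Real.pi * (-2 * w) / 2) = Complex.sin (Real.pi * (1/2 + w)) := by
    rw [show (Real.pi : ℂ) * (1/2 + w) = Real.pi * w + Real.pi / 2 by ring, Complex.sin_add_pi_div_two,
      show (Real.pi : ℂ) * (-2 * w) / 2 = - (Real.pi * w) by ring, Complex.cos_neg]
  have hpi : (Real.pi : ℂ) ≠ 0 := by exact_mod_cast Real.pi_ne_zero
  have hg : Gamma (1/2) = (√Real.pi : ℝ) := by
    rw [Gamma_one_half_eq, Real.sqrt_eq_rpow, ofReal_cpow Real.pi_pos.le]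
    norm_num
  have hsq : ((√Real.pi : ℝ) : ℂ) * (√Real.pi : ℝ) = Real.pi := by
    rw [← ofReal_mul, Real.mul_self_sqrt Real.pi_pos.le]
  rw [hc, hg]
  rw [show 1 - (1/2 + w) = 1/2 - w by ring] at hr
  rw [show -w + 1/2 = 1/2 - w by ring, show 2 * -w = -2 * w by ring,
    show 1 - -2 * w = 1 + 2 * w by ring, cpow_add _ _ two_ne_zero, cpow_one] at hd
  set S := Complex.sin (Real.pi * (1/2 + w))
  have hS : S ≠ 0 := by
    intro h
    rw [h, div_zero] at hr
    exact mul_ne_zero h0 h0' hr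
  rw [eq_div_iff hS] at hr
  rw [eq_div_iff h0]
  apply mul_right_cancel₀ h0'
  apply mul_right_cancel₀ hpi
  linear_combination (2 * 2 ^ (2 * w) * Gamma (-2 * w) * Real.pi) * hr
    - (√Real.pi : ℝ) * Real.pi * hd - 2 * 2 ^ (2 * w) * Gamma (-2 * w) * Real.pi * hsq

lemma hker_mellin {a : ℕ} (ha : a = 0 ∨ a = 1) {w : ℂ} (h1 : 1/2 - (a:ℝ)/2 < w.re)
    (h2 : w.re < 1 - (a : ℝ)/2) :
    HasMellin (fun v => hker a v - 1) (-w)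
      (Gamma ((a : ℂ) + 1/2) * (Gamma (-w) / Gamma ((a:ℂ) + 1/2 + w))) := by
  have hre : (-2 * w).re = -2 * w.re := by simp
  have hre2 : (1/2 + w).re = 1/2 + w.re := by simp
  have hre3 : (1/2 - w).re = 1/2 - w.re := by simp
  rcases ha with rfl | rfl
  · norm_num at h1 h2
    have h := comp_mellin (cos_mellin' (s := -2 * w) (by linarith) (by linarith))
    rw [gamma_id (Gamma_ne_zero_of_re_pos (by linarith)) (Gamma_ne_zero fun m hm => by
      have := congrArg re hm
      rw [hre3] at this
      simp at this
      rcases m with _ | m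
      · norm_num at this; linarith
      · push_cast at this; have : (0:ℝ) ≤ m := m.cast_nonneg
        linarith)] at h
    convert h using 1
    · ext v; simp [hker]
    · rw [Nat.cast_zero, zero_add, mul_div_assoc]
  · norm_num at h1 h2
    have h := comp_mellin (sinc_mellin (s := -2 * w) (by linarith) (by linarith))
    have g := gamma_id (w := w) (Gamma_ne_zero_of_re_pos (by linarith))
      (Gamma_ne_zero_of_re_pos (by linarith))
    rw [← mul_div_assoc, g] at h
    convert h using 1
    · ext v; simp [hker]
    have hne : 1/2 + w ≠ 0 := by
      intro h; have := congrArg re h; rw [hre2] at this; simp at this; linarith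
    have e1 : Gamma (((1:ℕ):ℂ) + 1/2) = 1/2 * Gamma (1/2) := by
      rw [Nat.cast_one, add_comm, Gamma_add_one _ (by norm_num)]
    have e2 : Gamma (((1:ℕ):ℂ) + 1/2 + w) = (1/2 + w) * Gamma (1/2 + w) := by
      rw [Nat.cast_one, show 1 + 1/2 + w = (1/2 + w) + 1 by ring, Gamma_add_one _ hne]
    have hne' : 1 - -2 * w ≠ 0 := by
      intro h; apply hne; linear_combination h / 2
    have hG : Gamma (1/2 + w) ≠ 0 := Gamma_ne_zero_of_re_pos (by linarith)
    rw [e1, e2]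
    rw [show 1 - -2 * w = 2 * (1/2 + w) by ring]
    generalize Gamma (1/2 + w) = G at *
    generalize 1/2 + w = q at *
    field_simp

lemma hs_congr {f g : ℕ → ℂ} {a : ℂ} (h : ∀ n, f n = g n) (hg : HasSum g a) : HasSum f a := by
  rwa [funext h]

lemma gamma_norm_le {z : ℂ} (hz : 0 < z.re) : ‖Gamma z‖ ≤ Real.Gamma z.re := by
  rw [Gamma_eq_integral hz, Real.Gamma_eq_integral hz, GammaIntegral]
  refine (norm_integral_le_integral_norm _).trans (le_of_eq ?_)
  refine setIntegral_congr_fun measurableSet_Ioi fun t ht => ?_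
  rw [norm_mul, norm_cpow_eq_rpow_re_of_pos ht, norm_real, Real.norm_of_nonneg (Real.exp_pos _).le]
  simp

lemma gamma_vert_cont {d : ℝ} (hd : 0 < d) : Continuous fun t : ℝ => Gamma ((d : ℂ) + t * I) := by
  refine continuous_iff_continuousAt.2 fun t => ?_
  have h : ContinuousAt Gamma ((d : ℂ) + t * I) :=
    (differentiableAt_Gamma _ fun m hm => by
      have := congrArg re hm
      simp at this
      have h2 : (0:ℝ) ≤ m := m.cast_nonneg
      linarith).continuousAt
  exact ContinuousAt.comp (f := fun t : ℝ => (d : ℂ) + t * I) h (by fun_prop)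

lemma gamma_vert_int {d : ℝ} (hd : 1 < d) : Integrable fun t : ℝ => Gamma ((d : ℂ) + t * I) := by
  refine Integrable.mono' (integrable_inv_one_add_sq.const_mul (Real.Gamma (d + 2)))
    (gamma_vert_cont (by linarith)).aestronglyMeasurable (Eventually.of_forall fun t => ?_)
  set s : ℂ := (d : ℂ) + t * I with hs
  have hre : s.re = d := by simp [s]
  have him : s.im = t := by simp [s]
  have hs0 : s ≠ 0 := by intro h; rw [h] at hre; simp at hre; linarith
  have hs1 : s + 1 ≠ 0 := by
    intro h; have := congrArg re h; simp [hre] at this; linarith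
  have e : Gamma (s + 1 + 1) = (s + 1) * (s * Gamma s) := by
    rw [Gamma_add_one _ hs1, Gamma_add_one _ hs0]
  have hb := gamma_norm_le (z := s + 1 + 1) (by simp [hre]; linarith)
  rw [e, norm_mul, norm_mul] at hb
  have er : (s + 1 + 1).re = d + 2 := by simp [hre]; ring
  rw [er] at hb
  have n1 : 1 + t ^ 2 ≤ ‖s‖ ^ 2 := by
    rw [← normSq_eq_norm_sq, normSq_apply, hre, him]; nlinarith
  have n2 : ‖s‖ ≤ ‖s + 1‖ := by
    rw [← sq_le_sq₀ (norm_nonneg _) (norm_nonneg _), ← normSq_eq_norm_sq, ← normSq_eq_norm_sq,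
      normSq_apply, normSq_apply]
    simp [hre, him]; nlinarith
  rw [← div_eq_mul_inv, le_div_iff₀ (by positivity)]
  calc ‖Gamma s‖ * (1 + t ^ 2) ≤ ‖Gamma s‖ * (‖s + 1‖ * ‖s‖) := by
        gcongr
        nlinarith [norm_nonneg s]
    _ ≤ _ := by linarith

lemma gamma_inv {d x : ℝ} (hd : 1 < d) (hx : 0 < x) :
    (1 / (2 * Real.pi) : ℂ) * ∫ t : ℝ, (x : ℂ) ^ (-((d : ℂ) + t * I)) * Gamma ((d : ℂ) + t * I)
      = cexp (-x) := by
  have hM : ∀ s : ℂ, 0 < s.re → HasMellin (fun z : ℝ => cexp (-z)) s (Gamma s) := by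
    intro s hs
    have h1 := cgamma_conv hs (r := 1) (by simp)
    have h2 := cgamma hs (r := 1) (by simp)
    simp only [one_mul, div_one, one_cpow] at h1 h2
    exact ⟨h1, h2⟩
  have hl : ∀ t : ℝ, mellin (fun z : ℝ => cexp (-z)) ((d : ℂ) + t * I) = Gamma ((d : ℂ) + t * I) :=
    fun t => (hM _ (by simp; linarith)).2
  have := mellinInv_mellin_eq d (fun z : ℝ => cexp (-z)) hx (hM _ (by simp; linarith)).1
    (by
      rw [VerticalIntegrable]
      simp only [hl]
      exact gamma_vert_int hd) (by fun_prop)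
  rw [mellinInv] at this
  simp only [hl] at this
  rw [← this]
  simp only [smul_eq_mul, real_smul]
  push_cast
  rfl

lemma fact_id0 (n : ℕ) : ((2 * n).factorial : ℂ) =
    4 ^ n * (n.factorial * (ascPochhammer ℂ n).eval (((0 : ℕ) : ℂ) + 1/2)) := by
  induction n with
  | zero => simp
  | succ n ih =>
    rw [show 2 * (n + 1) = (2 * n + 1) + 1 by ring, Nat.factorial_succ, Nat.factorial_succ,
      Nat.factorial_succ, ascPochhammer_succ_eval]
    push_cast at ih ⊢
    rw [ih]; ring

lemma fact_id1 (n : ℕ) : ((2 * n + 1).factorial : ℂ) =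
    4 ^ n * (n.factorial * (ascPochhammer ℂ n).eval (((1 : ℕ) : ℂ) + 1/2)) := by
  induction n with
  | zero => simp
  | succ n ih =>
    rw [show 2 * (n + 1) + 1 = (2 * n + 1 + 1) + 1 by ring, Nat.factorial_succ (2 * n + 1 + 1),
      Nat.factorial_succ (2 * n + 1), Nat.factorial_succ n, ascPochhammer_succ_eval]
    push_cast at ih ⊢
    rw [ih]; ring

noncomputable def cker (a n : ℕ) : ℂ :=
  (-1) ^ n / (n.factorial * (ascPochhammer ℂ n).eval ((a : ℂ) + 1/2))

lemma poch_ne (a n : ℕ) : (ascPochhammer ℂ n).eval ((a : ℂ) + 1/2) ≠ 0 := by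
  induction n with
  | zero => simp
  | succ n ih =>
    rw [ascPochhammer_succ_eval]
    refine mul_ne_zero ih ?_
    intro h
    have := congrArg re h
    simp at this
    have h2 : (0:ℝ) ≤ n := n.cast_nonneg
    have h3 : (0:ℝ) ≤ a := a.cast_nonneg
    linarith

lemma hker_hasSum {a : ℕ} (ha : a = 0 ∨ a = 1) {v : ℝ} (hv : 0 < v) :
    HasSum (fun n : ℕ => cker a n * (v : ℂ) ^ n) (hker a v) := by
  have hsq : ((2 * v ^ (1/2 : ℝ) : ℝ) : ℂ) ^ 2 = 4 * v := by
    rw [← Real.sqrt_eq_rpow, ← ofReal_pow, mul_pow, Real.sq_sqrt hv.le]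
    push_cast; ring
  have hy : ((2 * v ^ (1/2 : ℝ) : ℝ) : ℂ) ≠ 0 := by
    rw [Ne, ofReal_eq_zero]; positivity
  rcases ha with rfl | rfl
  · simp only [hker, if_true]
    convert Complex.hasSum_cos _ using 1
    ext n
    rw [fact_id0, pow_mul, hsq, cker, mul_pow]
    have := poch_ne 0 n
    have h2 : (n.factorial : ℂ) ≠ 0 := by exact_mod_cast n.factorial_ne_zero
    field_simp
  · simp only [hker, one_ne_zero, if_false]
    refine hs_congr (fun n => ?_)
      ((Complex.hasSum_sin ((2 * v ^ (1/2 : ℝ) : ℝ) : ℂ)).div_const _)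
    rw [fact_id1, pow_succ, pow_mul, hsq, cker, mul_pow]
    have := poch_ne 1 n
    have h2 : (n.factorial : ℂ) ≠ 0 := by exact_mod_cast n.factorial_ne_zero
    field_simp

lemma gamma_poch {α : ℝ} (hα : 0 < α) (n : ℕ) :
    Gamma ((α : ℂ) + n) = (ascPochhammer ℂ n).eval (α : ℂ) * Gamma α := by
  induction n with
  | zero => simp
  | succ n ih =>
    rw [ascPochhammer_succ_eval]
    push_cast
    rw [← add_assoc, Gamma_add_one, ih]
    · ring
    · norm_cast; positivity

lemma G_summable {α X : ℝ} (hα : 0 < α) (hX : 0 < X) (a : ℕ) :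
    Summable fun n : ℕ => cker a n * ((1 / (X : ℂ)) ^ ((α : ℂ) + n) * Gamma ((α : ℂ) + n)) := by
  have hX0 : (1 / X : ℂ) ≠ 0 := by simp [hX.ne']
  have hα' : ∀ n : ℕ, (α : ℂ) + n ≠ 0 := fun n => by norm_cast; positivity
  have hβ' : ∀ n : ℕ, (a : ℂ) + 1/2 + n ≠ 0 := fun n => by
    have : (0:ℝ) < (a : ℝ) + 1/2 + n := by positivity
    have h2 : (((a : ℝ) + 1/2 + n : ℝ) : ℂ) ≠ 0 := by exact_mod_cast this.ne'
    push_cast at h2; exact h2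
  have hne : ∀ n : ℕ, cker a n * ((1 / (X : ℂ)) ^ ((α : ℂ) + n) * Gamma ((α : ℂ) + n)) ≠ 0 := by
    intro n
    refine mul_ne_zero ?_ (mul_ne_zero ?_ (Gamma_ne_zero_of_re_pos (by simp; positivity)))
    · have := poch_ne a n
      have h2 : (n.factorial : ℂ) ≠ 0 := by exact_mod_cast n.factorial_ne_zero
      rw [cker]
      refine div_ne_zero (by simp) (mul_ne_zero h2 this)
    · rw [Ne, cpow_eq_zero_iff]; tauto
  refine summable_of_ratio_test_tendsto_lt_one (l := 0) one_pos (Eventually.of_forall hne) ?_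
  have hrat : ∀ n : ℕ, ‖cker a (n+1) * ((1 / (X : ℂ)) ^ ((α : ℂ) + (n+1 : ℕ)) * Gamma ((α : ℂ) + (n+1 : ℕ)))‖ /
      ‖cker a n * ((1 / (X : ℂ)) ^ ((α : ℂ) + n) * Gamma ((α : ℂ) + n))‖ =
      (1 / X) * (1 + (α - (a + 1/2)) / ((a : ℝ) + 1/2 + n)) * (1 / ((n : ℝ) + 1)) := by
    intro n
    have e : cker a (n+1) * ((1 / (X : ℂ)) ^ ((α : ℂ) + (n+1 : ℕ)) * Gamma ((α : ℂ) + (n+1 : ℕ))) =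
        (-(((1 / X) * (1 + (α - (a + 1/2)) / ((a : ℝ) + 1/2 + n)) * (1 / ((n : ℝ) + 1)) : ℝ) : ℂ)) *
        (cker a n * ((1 / (X : ℂ)) ^ ((α : ℂ) + n) * Gamma ((α : ℂ) + n))) := by
      have h1 : Gamma ((α : ℂ) + (n+1 : ℕ)) = (α + n) * Gamma (α + n) := by
        push_cast
        rw [← add_assoc, Gamma_add_one _ (hα' n)]
      have h2 : (1 / (X : ℂ)) ^ ((α : ℂ) + (n+1 : ℕ)) = (1 / (X : ℂ)) ^ ((α : ℂ) + n) * (1 / X) := by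
        push_cast
        rw [← add_assoc, cpow_add _ _ hX0, cpow_one]
      have h3 : (1 + (α - ((a:ℂ) + 1/2)) / ((a : ℂ) + 1/2 + n)) = (α + n) / ((a : ℂ) + 1/2 + n) := by
        have := hβ' n
        generalize hq : (a : ℂ) + 1/2 = q at *
        field_simp; ring
      rw [h1, h2, cker, cker, Nat.factorial_succ, ascPochhammer_succ_eval]
      push_cast
      rw [h3]
      have p1 := poch_ne a n
      have p2 : (n.factorial : ℂ) ≠ 0 := by exact_mod_cast n.factorial_ne_zero
      have p3 := hβ' n
      have p4 : (n : ℂ) + 1 ≠ 0 := by exact_mod_cast n.succ_ne_zero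
      have p5 : (X : ℂ) ≠ 0 := by exact_mod_cast hX.ne'
      generalize (ascPochhammer ℂ n).eval ((a : ℂ) + 1/2) = P at *
      generalize (a : ℂ) + 1/2 + n = Q at *
      rw [pow_succ]
      field_simp
    rw [e, norm_mul, mul_div_cancel_right₀ _ (norm_ne_zero_iff.2 (hne n)), norm_neg, norm_real,
      Real.norm_of_nonneg]
    have : 1 + (α - (a + 1/2)) / ((a : ℝ) + 1/2 + n) = (α + n) / ((a : ℝ) + 1/2 + n) := by
      have : (0:ℝ) < (a : ℝ) + 1/2 + n := by positivity
      field_simp; ring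
    rw [this]; positivity
  simp only [hrat]
  have t1 : Tendsto (fun n : ℕ => (α - (a + 1/2)) / ((a : ℝ) + 1/2 + n)) atTop (𝓝 0) :=
    tendsto_const_nhds.div_atTop (tendsto_atTop_add_const_left _ _ tendsto_natCast_atTop_atTop)
  have t2 := ((t1.const_add 1).const_mul (1 / X)).mul (tendsto_one_div_add_atTop_nhds_zero_nat (𝕜 := ℝ))
  simpa using t2

lemma hker_meas (a : ℕ) : Measurable (hker a) := by
  have h : Measurable fun v : ℝ => ((2 * v ^ (1/2 : ℝ) : ℝ) : ℂ) := by fun_prop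
  unfold hker
  split_ifs
  · exact Complex.measurable_cos.comp h
  · exact (Complex.measurable_sin.comp h).div h

lemma hker_bd (a : ℕ) (v : ℝ) : ‖hker a v‖ ≤ 1 := by
  unfold hker
  split_ifs
  · rw [← ofReal_cos, norm_real]; exact Real.abs_cos_le_one _
  · rw [← ofReal_sin, norm_div, norm_real, norm_real]
    exact div_le_one_of_le₀ Real.abs_sin_le_abs (norm_nonneg _)

lemma laplace_hker {α X : ℝ} (hα : 0 < α) (hX : 0 < X) {a : ℕ} (ha : a = 0 ∨ a = 1) :
    ∫ v : ℝ in Ioi 0, (v : ℂ) ^ ((α : ℂ) - 1) * cexp (-(X * v)) * (hker a v - 1) =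
      Gamma α * (X : ℂ) ^ (-(α : ℂ)) * (oneF1 α ((a : ℂ) + 1/2) (-1 / X) - 1) := by
  have hX0 : (1 / X : ℂ) ≠ 0 := by simp [hX.ne']
  have hXr : 0 < (X : ℂ).re := by simpa
  have hre : ∀ n : ℕ, 0 < ((α : ℂ) + n).re := fun n => by simp; positivity
  let F : ℕ → ℝ → ℂ := fun n v => cker a n * ((v : ℂ) ^ ((α : ℂ) + n - 1) * cexp (-(X * v)))
  have hFint : ∀ n, Integrable (F n) (volume.restrict (Ioi 0)) := fun n =>
    (cgamma_conv (hre n) hXr).const_mul _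
  have hFval : ∀ n, ∫ v in Ioi 0, F n v =
      cker a n * ((1 / (X : ℂ)) ^ ((α : ℂ) + n) * Gamma ((α : ℂ) + n)) := fun n => by
    rw [integral_const_mul, cgamma (hre n) hXr]
  have hFnorm : ∀ n, ∫ v in Ioi 0, ‖F n v‖ =
      ‖cker a n * ((1 / (X : ℂ)) ^ ((α : ℂ) + n) * Gamma ((α : ℂ) + n))‖ := fun n => by
    have e : ∀ v ∈ Ioi (0:ℝ), ‖F n v‖ = ‖cker a n‖ * (v ^ ((α + n) - 1) * Real.exp (-(X * v))) := by
      intro v hv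
      simp only [F]
      rw [norm_mul, norm_mul, norm_cpow_eq_rpow_re_of_pos hv, norm_exp]
      simp
    rw [setIntegral_congr_fun measurableSet_Ioi e, integral_const_mul,
      Real.integral_rpow_mul_exp_neg_mul_Ioi (by positivity) hX, norm_mul, norm_mul]
    have e1 : (1 / (X : ℂ)) = ((1 / X : ℝ) : ℂ) := by push_cast; rfl
    have e2 : (α : ℂ) + n = ((α + n : ℝ) : ℂ) := by push_cast; rfl
    rw [e1, norm_cpow_eq_rpow_re_of_pos (by positivity), e2, Gamma_ofReal, norm_real,
      Real.norm_of_nonneg (Real.Gamma_pos_of_pos (by positivity)).le]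
    simp
  have hsum := hasSum_integral_of_summable_integral_norm hFint (by
    simp only [hFnorm]; exact (G_summable hα hX a).norm)
  simp only [hFval] at hsum
  have hts : ∀ v ∈ Ioi (0:ℝ), ∑' n, F n v = (v : ℂ) ^ ((α : ℂ) - 1) * cexp (-(X * v)) * hker a v := by
    intro v hv
    have hv0 : (v : ℂ) ≠ 0 := by exact_mod_cast (ne_of_gt hv)
    refine HasSum.tsum_eq ?_
    refine hs_congr (fun n => ?_)
      ((hker_hasSum ha hv).mul_left ((v : ℂ) ^ ((α : ℂ) - 1) * cexp (-(X * v))))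
    simp only [F]
    rw [show (α : ℂ) + n - 1 = (α - 1) + n by ring, cpow_add _ _ hv0, cpow_natCast]
    ring
  rw [setIntegral_congr_fun measurableSet_Ioi hts] at hsum
  -- zeroth term
  have h0 : ∫ v : ℝ in Ioi 0, (v : ℂ) ^ ((α : ℂ) - 1) * cexp (-(X * v)) = Gamma α * (X : ℂ) ^ (-(α : ℂ)) := by
    rw [cgamma (by simpa) hXr, one_div, inv_cpow, cpow_neg, mul_comm]
    rw [arg_ofReal_of_nonneg hX.le]; exact Real.pi_ne_zero.symm
  have h0i := cgamma_conv (a := α) (r := X) (by simpa) hXr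
  have hFullInt : IntegrableOn (fun v : ℝ => (v : ℂ) ^ ((α : ℂ) - 1) * cexp (-(X * v)) * hker a v) (Ioi 0) := by
    refine Integrable.mono' h0i.norm
      (h0i.aestronglyMeasurable.mul (hker_meas a).aestronglyMeasurable) ?_
    refine (ae_restrict_iff' measurableSet_Ioi).2 (Eventually.of_forall fun v _ => ?_)
    rw [norm_mul]
    exact mul_le_of_le_one_right (norm_nonneg _) (hker_bd a v)
  have hF1 : ∑' n : ℕ, cker a n * ((1 / (X : ℂ)) ^ ((α : ℂ) + n) * Gamma ((α : ℂ) + n)) =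
      Gamma α * (X : ℂ) ^ (-(α : ℂ)) * oneF1 α ((a : ℂ) + 1/2) (-1 / X) := by
    rw [oneF1, ← tsum_mul_left]
    refine tsum_congr fun n => ?_
    have e : (1 / (X : ℂ)) ^ (α : ℂ) = (X : ℂ) ^ (-(α : ℂ)) := by
      rw [one_div, inv_cpow, cpow_neg]
      rw [arg_ofReal_of_nonneg hX.le]; exact Real.pi_ne_zero.symm
    rw [gamma_poch hα, cpow_add _ _ hX0, e, cpow_natCast, cker, div_pow, div_pow]
    have p1 := poch_ne a n
    have p2 : (n.factorial : ℂ) ≠ 0 := by exact_mod_cast n.factorial_ne_zero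
    have p5 : (X : ℂ) ≠ 0 := by exact_mod_cast hX.ne'
    generalize (ascPochhammer ℂ n).eval ((a : ℂ) + 1/2) = P at *
    field_simp
    simp
  simp only [mul_sub, mul_one]
  rw [integral_sub hFullInt h0i, h0, ← hsum.tsum_eq, hF1]

lemma main_aux {k : ℝ} (hk : 1 ≤ k) {a : ℕ} (ha : a = 0 ∨ a = 1) {X : ℝ} (hX : 0 < X)
    {d : ℝ} (hd : (k + 1) / 2 < d) (hd' : d < k / 2 + 1) {α : ℝ} (hα : α = (k + a) / 2)
    (f : ℝ → ℂ) (hf : ∀ t, f t = (X : ℂ) ^ (-((d : ℂ) + t * I)) *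
      Gamma ((d : ℂ) + t * I) *
      (Gamma ((α : ℂ) - ((d : ℂ) + t * I)) / Gamma ((a : ℂ) + 1/2 + (((d : ℂ) + t * I) - α)))) :
    Integrable f ∧ (1 / (2 * Real.pi) : ℂ) * ∫ t, f t =
      Gamma α / Gamma ((a : ℂ) + 1/2) * (X : ℂ) ^ (-(α : ℂ)) *
        (oneF1 α ((a : ℂ) + 1/2) (-1 / X) - 1) := by
  have hX0 : (X : ℂ) ≠ 0 := by exact_mod_cast hX.ne'
  have ha0 : (0:ℝ) ≤ a := a.cast_nonneg
  have hα0 : 0 < α := by rw [hα]; positivity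
  have hd1 : 1 < d := by linarith
  have hG : Gamma ((a : ℂ) + 1/2) ≠ 0 := by
    refine Gamma_ne_zero_of_re_pos ?_
    simp; positivity
  have hb1 : 1/2 - (a:ℝ)/2 < d - α := by rw [hα]; linarith
  have hb2 : d - α < 1 - (a:ℝ)/2 := by rw [hα]; linarith
  have hM : ∀ t : ℝ, HasMellin (fun v => hker a v - 1) ((α : ℂ) - ((d : ℂ) + t * I))
      (Gamma ((a : ℂ) + 1/2) * (Gamma ((α : ℂ) - ((d : ℂ) + t * I)) /
        Gamma ((a : ℂ) + 1/2 + (((d : ℂ) + t * I) - α)))) := by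
    intro t
    have := hker_mellin ha (w := ((d : ℂ) + t * I) - α) (by simpa using hb1) (by simpa using hb2)
    rwa [neg_sub] at this
  let K : ℝ → ℝ → ℂ := fun t v => (X : ℂ) ^ (-((d : ℂ) + t * I)) * Gamma ((d : ℂ) + t * I) *
    ((v : ℂ) ^ ((α : ℂ) - ((d : ℂ) + t * I) - 1) * (hker a v - 1))
  have hfK : ∀ t, f t = (Gamma ((a : ℂ) + 1/2))⁻¹ * ∫ v in Ioi 0, K t v := by
    intro t
    have h := (hM t).2
    rw [mellin] at h
    simp only [smul_eq_mul] at h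
    simp only [K]
    rw [integral_const_mul, h, hf]
    have key : ∀ G A q : ℂ, G ≠ 0 → A * q = G⁻¹ * (A * (G * q)) := by
      intro G A q hG
      field_simp
    exact key _ _ _ hG
  have hKint : Integrable (Function.uncurry K) (volume.prod (volume.restrict (Ioi (0:ℝ)))) := by
    have i1 : Integrable fun t : ℝ => X ^ (-d) * ‖Gamma ((d : ℂ) + t * I)‖ :=
      (gamma_vert_int hd1).norm.const_mul _
    have i2 := (hM 0).1.norm
    refine Integrable.mono' (i1.mul_prod i2) ?_ ?_
    · have m1 : Measurable fun t : ℝ => (X : ℂ) ^ (-((d : ℂ) + t * I)) * Gamma ((d : ℂ) + t * I) :=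
        Measurable.mul (by fun_prop) (gamma_vert_cont (by linarith)).measurable
      have m2 : Measurable fun v : ℝ => hker a v - 1 := (hker_meas a).sub_const 1
      have m3 : Measurable fun p : ℝ × ℝ => (p.2 : ℂ) ^ ((α : ℂ) - ((d : ℂ) + p.1 * I) - 1) := by
        fun_prop
      exact ((m1.comp measurable_fst).mul (m3.mul (m2.comp measurable_snd))).aestronglyMeasurable
    · have hae : ∀ᵐ p : ℝ × ℝ ∂(volume.prod (volume.restrict (Ioi (0:ℝ)))), p.2 ∈ Ioi (0:ℝ) :=
        Measure.quasiMeasurePreserving_snd.ae (ae_restrict_mem measurableSet_Ioi)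
      filter_upwards [hae] with p hp
      simp only [Function.uncurry, K]
      rw [norm_mul, norm_mul, norm_mul, norm_cpow_eq_rpow_re_of_pos hX,
        norm_cpow_eq_rpow_re_of_pos hp, norm_smul, norm_cpow_eq_rpow_re_of_pos hp]
      simp
  constructor
  · have := hKint.integral_prod_left.const_mul (Gamma ((a : ℂ) + 1/2))⁻¹
    refine this.congr (Eventually.of_forall fun t => ?_)
    simp only [hfK]; rfl
  · simp only [hfK]
    rw [integral_const_mul, integral_integral_swap hKint]
    have hin : ∀ v ∈ Ioi (0:ℝ), ∫ t, K t v =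
        (2 * Real.pi) * ((v : ℂ) ^ ((α : ℂ) - 1) * cexp (-(X * v)) * (hker a v - 1)) := by
      intro v hv
      have hv : 0 < v := hv
      have hv0 : (v : ℂ) ≠ 0 := by exact_mod_cast hv.ne'
      have hi := gamma_inv hd1 (mul_pos hX hv)
      have e : ∀ t, K t v = ((v : ℂ) ^ ((α : ℂ) - 1) * (hker a v - 1)) *
          (((X * v : ℝ) : ℂ) ^ (-((d : ℂ) + t * I)) * Gamma ((d : ℂ) + t * I)) := by
        intro t
        simp only [K]
        rw [ofReal_mul, mul_cpow_ofReal_nonneg hX.le hv.le,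
          show (α : ℂ) - ((d : ℂ) + t * I) - 1 = (α - 1) + -((d : ℂ) + t * I) by ring,
          cpow_add _ _ hv0]
        ring
      simp only [e]
      rw [integral_const_mul]
      have hpi : (Real.pi : ℂ) ≠ 0 := by exact_mod_cast Real.pi_ne_zero
      rw [ofReal_mul] at hi
      rw [← hi]
      simp only [ofReal_mul]
      generalize (∫ t : ℝ, ((X : ℂ) * (v : ℂ)) ^ (-((d : ℂ) + t * I)) *
        Gamma ((d : ℂ) + t * I)) = J
      field_simp
    rw [setIntegral_congr_fun measurableSet_Ioi hin, integral_const_mul, laplace_hker hα0 hX ha]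
    have hpi : (Real.pi : ℂ) ≠ 0 := by exact_mod_cast Real.pi_ne_zero
    field_simp

end BarnesAux

theorem barnes_integral_shifted_eq_oneF1_sub_one (k : ℝ) (hk : 1 ≤ k)
    (a : ℕ) (ha : a = 0 ∨ a = 1) (X : ℝ) (hX : 0 < X)
    (d : ℝ) (hd : (k + 1) / 2 < d) (hd' : d < k / 2 + 1) :
    MeasureTheory.Integrable (fun t : ℝ =>
      Complex.Gamma ((d : ℂ) + t * I) *
        Complex.Gamma (((k : ℂ) + a) / 2 - ((d : ℂ) + t * I)) /
        Complex.Gamma ((1 + (a : ℂ) - k) / 2 + ((d : ℂ) + t * I)) *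
        (X : ℂ) ^ (-((d : ℂ) + t * I))) ∧
    (1 / (2 * Real.pi)) * ∫ t : ℝ,
        Complex.Gamma ((d : ℂ) + t * I) *
          Complex.Gamma (((k : ℂ) + a) / 2 - ((d : ℂ) + t * I)) /
          Complex.Gamma ((1 + (a : ℂ) - k) / 2 + ((d : ℂ) + t * I)) *
          (X : ℂ) ^ (-((d : ℂ) + t * I)) =
      Complex.Gamma (((k : ℂ) + a) / 2) / Complex.Gamma ((a : ℂ) + 1 / 2) *
        (X : ℂ) ^ (-(((k : ℂ) + a) / 2)) *
        (oneF1 (((k : ℂ) + a) / 2) ((a : ℂ) + 1 / 2) (-1 / X) - 1) := by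
  have h := BarnesAux.main_aux hk ha hX hd hd' (α := (k + a) / 2) rfl
    (fun t : ℝ =>
      Complex.Gamma ((d : ℂ) + t * I) *
        Complex.Gamma (((k : ℂ) + a) / 2 - ((d : ℂ) + t * I)) /
        Complex.Gamma ((1 + (a : ℂ) - k) / 2 + ((d : ℂ) + t * I)) *
        (X : ℂ) ^ (-((d : ℂ) + t * I))) (by
      intro t
      push_cast
      rw [show (1 + (a : ℂ) - k) / 2 + ((d : ℂ) + t * I) =
        (a : ℂ) + 1/2 + (((d : ℂ) + t * I) - ((k : ℂ) + a) / 2) by ring]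
      ring)
  push_cast at h
  exact h
end
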